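/- arXiv:1312.2917 — 2 statements merged into one kernel-verified Lean document; each statement's English description precedes it below -/
import Mathlib

section
/- Z-norm bound by the C¹ norm (Lemma 3.2(i), estimate (pi10)): For every h ∈ L²(I_δ) that is C¹ on I_{√ε/8}, one has ‖h‖_Z ≲ ε · ‖h‖_{C¹(I_{√ε/8})}. -/
noncomputable section
open Set MeasureTheory Filter Real

/-- The principal value at `α` of the integral `∫_ℝ F(β) dβ`, understood as the limit of the
integrals over `{β : r < |α − β|}` as `r → 0⁺`. -/
def pvI (F : ℝ → ℝ) (α : ℝ) : ℝ :=
  limUnder (nhdsWithin (0:ℝ) (Ioi 0)) (fun r => ∫ β in {β : ℝ | r < |α - β|}, F β)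

/-- `ψ` is a smooth even cutoff, with values in `[0,1]`, supported in `[−1,1]`,
equal to `1` on `[−1/2,1/2]`. -/
def IsCutoff (ψ : ℝ → ℝ) : Prop :=
  ContDiff ℝ (⊤ : ℕ∞) ψ ∧ (∀ x : ℝ, ψ (-x) = ψ x) ∧ (∀ x : ℝ, ψ x ∈ Icc (0:ℝ) 1) ∧
    (∀ x : ℝ, 1 < |x| → ψ x = 0) ∧ (∀ x : ℝ, |x| ≤ 1/2 → ψ x = 1)

/-- The rescaled cutoff `ψ_r(x) = ψ(x/r)`. -/
def scut (ψ : ℝ → ℝ) (r x : ℝ) : ℝ := ψ (x / r)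

/-- `X̃(α) = 2ε + f(α) + g(α)`. -/
def Xt (ε : ℝ) (f g : ℝ → ℝ) (α : ℝ) : ℝ := 2 * ε + f α + g α

/-- The operator `T_{1,f}`. -/
def T1 (ψ : ℝ → ℝ) (ε : ℝ) (f : ℝ → ℝ) (h : ℝ → ℝ) (α : ℝ) : ℝ :=
  (2 * π)⁻¹ * pvI (fun β =>
    (f α - f β) / ((α - β) ^ 2 + (f α - f β) ^ 2) * h β * scut ψ (Real.sqrt ε) (α - β)) α

/-- The operator `T_{2,f}`. -/
def T2 (ψ : ℝ → ℝ) (ε : ℝ) (f : ℝ → ℝ) (h : ℝ → ℝ) (α : ℝ) : ℝ :=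
  (2 * π)⁻¹ * pvI (fun β =>
    (α - β) / ((α - β) ^ 2 + (f α - f β) ^ 2) * h β * scut ψ (Real.sqrt ε) (α - β)) α

/-- The operator `T_{3,(f,g)}`. -/
def T3 (ψ : ℝ → ℝ) (ε : ℝ) (f g : ℝ → ℝ) (h : ℝ → ℝ) (α : ℝ) : ℝ :=
  (2 * π)⁻¹ * ∫ β : ℝ,
    (2 * ε + f α + g β) / ((α - β) ^ 2 + (2 * ε + f α + g β) ^ 2) * h β *
      scut ψ (Real.sqrt ε) (α - β)

/-- The operator `T_{4,(f,g)}`. -/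
def T4 (ψ : ℝ → ℝ) (ε : ℝ) (f g : ℝ → ℝ) (h : ℝ → ℝ) (α : ℝ) : ℝ :=
  (2 * π)⁻¹ * ∫ β : ℝ,
    (α - β) / ((α - β) ^ 2 + (2 * ε + f α + g β) ^ 2) * h β * scut ψ (Real.sqrt ε) (α - β)

/-- The kernel of the operator `H`. -/
def Hker (ψ : ℝ → ℝ) (ε : ℝ) (f g : ℝ → ℝ) (α β : ℝ) : ℝ :=
  (α - β)⁻¹ * ((Xt ε f g α) ^ 2 / ((α - β) ^ 2 + (Xt ε f g α) ^ 2)) *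
    scut ψ (Real.sqrt ε / 2 ^ 6) α * scut ψ (Real.sqrt ε / 2 ^ 6) (α - β)

/-- The kernel of the operator `M`. -/
def Mker (ψ : ℝ → ℝ) (ε : ℝ) (f g : ℝ → ℝ) (α β : ℝ) : ℝ :=
  (Xt ε f g α) / ((α - β) ^ 2 + (Xt ε f g α) ^ 2) *
    scut ψ (Real.sqrt ε / 2 ^ 6) α * scut ψ (Real.sqrt ε / 2 ^ 6) (α - β)

/-- The operator `H` (a principal value integral in the second variable of the kernel). -/
def Hop (ψ : ℝ → ℝ) (ε : ℝ) (f g : ℝ → ℝ) (h : ℝ → ℝ) (α : ℝ) : ℝ :=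
  (2 * π)⁻¹ * pvI (fun β => Hker ψ ε f g α β * h β) α

/-- The adjoint operator `H*` (integration of the kernel of `H` in its first variable). -/
def Hstar (ψ : ℝ → ℝ) (ε : ℝ) (f g : ℝ → ℝ) (φ : ℝ → ℝ) (β : ℝ) : ℝ :=
  (2 * π)⁻¹ * pvI (fun α => Hker ψ ε f g α β * φ α) β

/-- The operator `M`. -/
def Mop (ψ : ℝ → ℝ) (ε : ℝ) (f g : ℝ → ℝ) (h : ℝ → ℝ) (α : ℝ) : ℝ :=
  (2 * π)⁻¹ * ∫ β : ℝ, Mker ψ ε f g α β * h β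

/-- The adjoint operator `M*` (integration of the kernel of `M` in its first variable). -/
def Mstar (ψ : ℝ → ℝ) (ε : ℝ) (f g : ℝ → ℝ) (φ : ℝ → ℝ) (β : ℝ) : ℝ :=
  (2 * π)⁻¹ * ∫ α : ℝ, Mker ψ ε f g α β * φ α

/-- The class `C₂` of test functions: `C¹` functions compactly supported in `I_δ = (−δ,δ)` with
`|φ⁽ᵏ⁾(α)| ≤ ε/(ε^{2+k} + |α|^{2+k})` on `I_δ` for `k ∈ {0,1}`. -/
def InC2 (δ ε : ℝ) (φ : ℝ → ℝ) : Prop :=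
  ContDiff ℝ 1 φ ∧ HasCompactSupport φ ∧ tsupport φ ⊆ Ioo (-δ) δ ∧
    ∀ α ∈ Ioo (-δ) δ,
      |φ α| ≤ ε / (ε ^ 2 + |α| ^ 2) ∧ |deriv φ α| ≤ ε / (ε ^ 3 + |α| ^ 3)

/-- The standing hypotheses on `f, g : (−δ,δ) → ℝ`: they are `C⁵`, with
`‖f‖_{C³} + ‖g‖_{C³} ≤ A`, `f(0) = f'(0) = g(0) = g'(0) = 0`, and
`f(α) + g(β) ≥ −ε` for `α, β ∈ (−4√ε, 4√ε)`. -/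
def GoodFG (δ A ε : ℝ) (f g : ℝ → ℝ) : Prop :=
  ContDiffOn ℝ 5 f (Ioo (-δ) δ) ∧ ContDiffOn ℝ 5 g (Ioo (-δ) δ) ∧
    f 0 = 0 ∧ g 0 = 0 ∧
    derivWithin f (Ioo (-δ) δ) 0 = 0 ∧ derivWithin g (Ioo (-δ) δ) 0 = 0 ∧
    (∀ x ∈ Ioo (-δ) δ, ∀ i : ℕ, i ≤ 3 →
      |iteratedDerivWithin i f (Ioo (-δ) δ) x| + |iteratedDerivWithin i g (Ioo (-δ) δ) x| ≤ A) ∧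
    (∀ α ∈ Ioo (-(4 * Real.sqrt ε)) (4 * Real.sqrt ε),
      ∀ β ∈ Ioo (-(4 * Real.sqrt ε)) (4 * Real.sqrt ε), -ε ≤ f α + g β)
open Function

lemma bdd_integrable {X : Type*} [MeasurableSpace X] {μ : Measure X} {G : X → ℝ} (hG : Measurable G)
    (S : Set X) (hS : μ S ≠ ⊤) (C : ℝ) (hC : ∀ x, |G x| ≤ C)
    (h0 : ∀ x, x ∉ S → G x = 0) : Integrable G μ := by
  have h1 : IntegrableOn G S μ :=
    Measure.integrableOn_of_bounded hS hG.aestronglyMeasurable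
      (Filter.Eventually.of_forall (fun x => by simpa using hC x))
  refine (integrableOn_iff_integrable_of_support_subset ?_).1 h1
  intro x hx
  by_contra h
  exact hx (h0 x h)

lemma pv_eq (F : ℝ → ℝ → ℝ) (hFm : Measurable (uncurry F)) (B L ρ : ℝ)
    (hB : ∀ a y, |F a y| ≤ B)
    (hy : ∀ a y, ρ < |y| → F a y = 0) (heven : ∀ a y, F a (-y) = F a y)
    (hL : ∀ b y, |F (b + y) y - F (b - y) y| ≤ L * |y|) (β : ℝ) :
    pvI (fun α => (α - β)⁻¹ * F α (α - β)) β
      = ∫ y, 2⁻¹ * y⁻¹ * (F (β + y) y - F (β - y) y) := by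
  have hB0 : 0 ≤ B := (abs_nonneg _).trans (hB 0 0)
  have hL0 : 0 ≤ L := by
    have := hL 0 1
    simp at this
    exact (abs_nonneg _).trans this
  have hF' : Measurable fun p : ℝ × ℝ => F p.1 p.2 := hFm
  have hm1 : Measurable (fun y => F (β + y) y) :=
    hF'.comp (by fun_prop : Measurable fun y : ℝ => (β + y, y))
  have hm2 : Measurable (fun y => F (β - y) y) :=
    hF'.comp (by fun_prop : Measurable fun y : ℝ => (β - y, y))
  set D : ℝ → ℝ := fun y => 2⁻¹ * y⁻¹ * (F (β + y) y - F (β - y) y) with hD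
  have hDm : Measurable D := by
    exact ((measurable_id.inv).const_mul _).mul (hm1.sub hm2)
  have hDb : ∀ y, |D y| ≤ L := by
    intro y
    rcases eq_or_ne y 0 with rfl | h0
    · simpa [hD] using hL0
    · simp only [hD, abs_mul, abs_inv]
      have h1 : 0 < |y| := abs_pos.2 h0
      have h2 := hL β y
      calc |(2:ℝ)|⁻¹ * |y|⁻¹ * |F (β + y) y - F (β - y) y| ≤ |(2:ℝ)|⁻¹ * |y|⁻¹ * (L * |y|) := by gcongr
        _ = 2⁻¹ * L := by simp; field_simp
        _ ≤ L := by linarith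
  have hDi : Integrable D := by
    refine bdd_integrable hDm (Icc (-ρ) ρ) (by simp) L hDb ?_
    intro y h
    have : ρ < |y| := by
      by_contra h'
      exact h (abs_le.1 (not_lt.1 h'))
    simp [hD, hy _ y this]
  have key : ∀ r : ℝ, 0 < r →
      ∫ α in {α : ℝ | r < |β - α|}, (α - β)⁻¹ * F α (α - β) = ∫ y in {y : ℝ | r < |y|}, D y := by
    intro r hr
    have hS : MeasurableSet {y : ℝ | r < |y|} := measurableSet_lt measurable_const (by fun_prop)
    have hS' : MeasurableSet {α : ℝ | r < |β - α|} := measurableSet_lt measurable_const (by fun_prop)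
    rw [← integral_indicator hS', ← integral_indicator hS]
    set E : ℝ → ℝ := {y : ℝ | r < |y|}.indicator (fun y => y⁻¹ * F (β + y) y) with hE
    have hEm : Measurable E := by
      exact (measurable_id.inv.mul hm1).indicator hS
    have hEi : Integrable E := by
      refine bdd_integrable hEm (Icc (-ρ) ρ) (by simp) (r⁻¹ * B) ?_ ?_
      · intro y
        by_cases h : r < |y|
        · rw [hE, indicator_of_mem (by exact h), abs_mul, abs_inv]
          gcongr
          exact hB _ _
        · rw [hE, indicator_of_notMem (by exact h)]
          simp; positivity
      · intro y h
        have : ρ < |y| := by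
          by_contra h'
          exact h (abs_le.1 (not_lt.1 h'))
        simp [hE, Set.indicator, hy _ y this]
    have e1 : ∫ α, {α : ℝ | r < |β - α|}.indicator (fun α => (α - β)⁻¹ * F α (α - β)) α
        = ∫ y, E y := by
      rw [← integral_add_left_eq_self _ β]
      congr 1; ext y
      simp [hE, Set.indicator]
    have e2 : ∫ y, E y = ∫ y, E (-y) := (integral_neg_eq_self E volume).symm
    have e3 : ∫ y, {y : ℝ | r < |y|}.indicator D y = ∫ y, 2⁻¹ * (E y + E (-y)) := by
      congr 1; ext y
      by_cases h : r < |y|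
      · simp only [hE, Set.indicator, mem_ofPred_eq, abs_neg, h, if_true, hD, heven]
        rw [inv_neg]
        rw [show β + -y = β - y by ring]; ring
      · simp [hE, Set.indicator, h]
    rw [e1, e3, integral_const_mul, integral_add hEi hEi.comp_neg, ← e2]; ring
  unfold pvI
  apply Filter.Tendsto.limUnder_eq
  have : Tendsto (fun r : ℝ => ∫ y, {y : ℝ | r < |y|}.indicator D y) (nhdsWithin (0:ℝ) (Ioi 0))
      (nhds (∫ y, D y)) := by
    refine tendsto_integral_filter_of_dominated_convergence (fun y => |D y|) ?_ ?_ hDi.abs ?_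
    · refine Filter.Eventually.of_forall fun r => ?_
      exact (hDm.indicator (measurableSet_lt measurable_const (by fun_prop))).aestronglyMeasurable
    · refine Filter.Eventually.of_forall fun r => Filter.Eventually.of_forall fun y => ?_
      simpa using norm_indicator_le_norm_self D y
    · have : ∀ᵐ y : ℝ, y ≠ 0 := by simp [ae_iff]
      filter_upwards [this] with y h0
      refine tendsto_const_nhds.congr' ?_
      have : ∀ᶠ r in nhdsWithin (0:ℝ) (Ioi 0), r < |y| :=
        nhdsWithin_le_nhds (eventually_lt_nhds (abs_pos.2 h0))
      filter_upwards [this] with r hr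
      rw [indicator_of_mem (by exact hr)]
  refine this.congr' ?_
  filter_upwards [self_mem_nhdsWithin] with r hr
  rw [key r hr, integral_indicator (measurableSet_lt measurable_const (by fun_prop))]

lemma core (F : ℝ → ℝ → ℝ) (hFm : Measurable (uncurry F)) (B L ρ M : ℝ) (hM : 0 ≤ M)
    (hB : ∀ a y, |F a y| ≤ B)
    (ha : ∀ a y, ρ < |a| → F a y = 0)
    (hy : ∀ a y, ρ < |y| → F a y = 0) (heven : ∀ a y, F a (-y) = F a y)
    (hL : ∀ b y, |F (b + y) y - F (b - y) y| ≤ L * |y|)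
    (h : ℝ → ℝ) (hm : Measurable h) (hbd : ∀ x, |x| ≤ 2 * ρ → |h x| ≤ M)
    (hlip : ∀ a y, |a| ≤ ρ → |y| ≤ ρ → |h (a - y) - h (a + y)| ≤ 2 * M * |y|) :
    |∫ β, h β * pvI (fun α => (α - β)⁻¹ * F α (α - β)) β| ≤ M * ∫ a, ∫ y, |F a y| := by
  have hB0 : 0 ≤ B := (abs_nonneg _).trans (hB 0 0)
  have hL0 : 0 ≤ L := by
    have := hL 0 1
    simp at this
    exact (abs_nonneg _).trans this
  have hF' : Measurable fun p : ℝ × ℝ => F p.1 p.2 := hFm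
  -- zero off the box
  have z1 : ∀ β y, 2 * ρ < |β| → F (β + y) y = 0 := by
    intro β y h1
    by_cases h2 : ρ < |y|
    · exact hy _ _ h2
    · apply ha
      have := abs_sub_abs_le_abs_sub β (-y)
      rw [abs_neg, sub_neg_eq_add] at this
      linarith
  have z2 : ∀ β y, 2 * ρ < |β| → F (β - y) y = 0 := by
    intro β y h1
    have := z1 β (-y) h1
    rwa [heven, ← sub_eq_add_neg] at this
  have box : ∀ p : ℝ × ℝ, p ∉ Icc (-(2*ρ)) (2*ρ) ×ˢ Icc (-(2*ρ)) (2*ρ) →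
      2 * ρ < |p.1| ∨ 2 * ρ < |p.2| := by
    intro p hp
    by_contra h'
    push Not at h'
    exact hp ⟨abs_le.1 h'.1, abs_le.1 h'.2⟩
  have hy2 : ∀ a y, 2 * ρ < |y| → F a y = 0 := by
    intro a y h1
    apply hy
    by_contra h2
    have := abs_nonneg y
    push Not at h2
    linarith
  have ha2 : ∀ a y, 2 * ρ < |a| → F a y = 0 := by
    intro a y h1
    apply ha
    by_contra h2
    have := abs_nonneg a
    push Not at h2
    linarith
  have boxfin : (volume : Measure (ℝ × ℝ)) (Icc (-(2*ρ)) (2*ρ) ×ˢ Icc (-(2*ρ)) (2*ρ)) ≠ ⊤ := by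
    rw [Measure.volume_eq_prod, Measure.prod_prod]
    simp [ENNReal.mul_eq_top]
  have hFi : Integrable (fun p : ℝ × ℝ => |F p.1 p.2|) := by
    refine bdd_integrable (by fun_prop) _ boxfin B (fun p => by simpa using hB _ _) ?_
    intro p hp
    rcases box p hp with h1 | h1
    · simp [ha2 _ _ h1]
    · simp [hy2 _ _ h1]
  have hm1 : Measurable (fun p : ℝ × ℝ => F (p.1 + p.2) p.2) :=
    hF'.comp (by fun_prop : Measurable fun p : ℝ × ℝ => (p.1 + p.2, p.2))
  have hm2 : Measurable (fun p : ℝ × ℝ => F (p.1 - p.2) p.2) :=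
    hF'.comp (by fun_prop : Measurable fun p : ℝ × ℝ => (p.1 - p.2, p.2))
  set W : ℝ → ℝ → ℝ := fun β y => h β * (2⁻¹ * y⁻¹ * (F (β + y) y - F (β - y) y)) with hW
  have hWi : Integrable (uncurry W) := by
    refine bdd_integrable ?_ _ boxfin (M * L) ?_ ?_
    · exact (hm.comp measurable_fst).mul ((measurable_snd.inv.const_mul _).mul (hm1.sub hm2))
    · rintro ⟨β, y⟩
      simp only [uncurry, hW]
      by_cases h1 : 2 * ρ < |β|
      · simp [z1 _ y h1, z2 _ y h1]; positivity
      · rw [abs_mul]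
        have := hbd β (not_lt.1 h1)
        gcongr
        rcases eq_or_ne y 0 with rfl | h0
        · simpa using hL0
        · simp only [abs_mul, abs_inv]
          have h1 : 0 < |y| := abs_pos.2 h0
          have h2 := hL β y
          calc |(2:ℝ)|⁻¹ * |y|⁻¹ * |F (β + y) y - F (β - y) y|
              ≤ |(2:ℝ)|⁻¹ * |y|⁻¹ * (L * |y|) := by gcongr
            _ = 2⁻¹ * L := by simp; field_simp
            _ ≤ L := by linarith
    · rintro ⟨β, y⟩ hp
      simp only [uncurry, hW]
      rcases box _ hp with h1 | h1
      · simp [z1 _ _ h1, z2 _ _ h1]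
      · simp [hy2 _ _ h1]
  have s1 : ∫ β, h β * pvI (fun α => (α - β)⁻¹ * F α (α - β)) β = ∫ y, ∫ β, W β y := by
    rw [integral_integral_swap (f := fun y β => W β y) (by exact hWi.swap)]
    congr 1; ext β
    rw [pv_eq F hFm B L ρ hB hy heven hL β, integral_const_mul]
  have s2 : ∀ y, |∫ β, W β y| ≤ M * ∫ a, |F a y| := by
    intro y
    have hya : Measurable fun a => F a y := hF'.comp (by fun_prop : Measurable fun a : ℝ => (a, y))
    have hFyi : Integrable fun a => |F a y| := by
      refine bdd_integrable (by fun_prop) (Icc (-(2*ρ)) (2*ρ)) (by simp) B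
        (fun p => by simpa using hB _ _) ?_
      intro a h1
      have : 2 * ρ < |a| := by
        by_contra h'
        exact h1 (abs_le.1 (not_lt.1 h'))
      simp [ha2 _ _ this]
    have i1 : Integrable fun β => h β * F (β + y) y := by
      refine bdd_integrable (hm.mul (hya.comp (by fun_prop : Measurable fun β => β + y)))
        (Icc (-(2*ρ)) (2*ρ)) (by simp) (M * B) ?_ ?_
      · intro β
        by_cases h1 : 2 * ρ < |β|
        · simp [z1 _ y h1]; positivity
        · rw [abs_mul]
          have := hbd β (not_lt.1 h1)
          gcongr
          exact hB _ _
      · intro a h1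
        have : 2 * ρ < |a| := by
          by_contra h'
          exact h1 (abs_le.1 (not_lt.1 h'))
        simp [z1 _ _ this]
    have i2 : Integrable fun β => h β * F (β - y) y := by
      refine bdd_integrable (hm.mul (hya.comp (by fun_prop : Measurable fun β => β - y)))
        (Icc (-(2*ρ)) (2*ρ)) (by simp) (M * B) ?_ ?_
      · intro β
        by_cases h1 : 2 * ρ < |β|
        · simp [z2 _ y h1]; positivity
        · rw [abs_mul]
          have := hbd β (not_lt.1 h1)
          gcongr
          exact hB _ _
      · intro a h1
        have : 2 * ρ < |a| := by
          by_contra h'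
          exact h1 (abs_le.1 (not_lt.1 h'))
        simp [z2 _ _ this]
    have e : ∫ β, W β y = ∫ a, 2⁻¹ * y⁻¹ * ((h (a - y) - h (a + y)) * F a y) := by
      have e0 : ∀ β, W β y = 2⁻¹ * y⁻¹ * (h β * F (β + y) y - h β * F (β - y) y) := by
        intro β; simp only [hW]; ring
      have i1' : Integrable fun a => h (a - y) * F a y := by
        simpa using i1.comp_sub_right y
      have i2' : Integrable fun a => h (a + y) * F a y := by
        simpa using i2.comp_add_right y
      simp_rw [e0, sub_mul]
      rw [integral_const_mul, integral_const_mul, integral_sub i1 i2, integral_sub i1' i2']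
      congr 2
      · rw [← integral_sub_right_eq_self (fun β => h β * F (β + y) y) y]; simp
      · rw [← integral_add_right_eq_self (fun β => h β * F (β - y) y) y]; simp
    rw [e, ← integral_const_mul, ← norm_eq_abs]
    refine (norm_integral_le_integral_norm _).trans ?_
    refine integral_mono_of_nonneg (Filter.Eventually.of_forall fun _ => norm_nonneg _)
      (hFyi.const_mul _) (Filter.Eventually.of_forall fun a => ?_)
    simp only [norm_eq_abs, abs_mul, abs_inv]
    by_cases h1 : ρ < |a|
    · simp [ha _ y h1]
    by_cases h2 : ρ < |y|
    · simp [hy a _ h2]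
    have := hlip a y (not_lt.1 h1) (not_lt.1 h2)
    rcases eq_or_ne y 0 with rfl | h0
    · simp; positivity
    have h3 : 0 < |y| := abs_pos.2 h0
    calc |(2:ℝ)|⁻¹ * |y|⁻¹ * (|h (a - y) - h (a + y)| * |F a y|)
        ≤ |(2:ℝ)|⁻¹ * |y|⁻¹ * ((2 * M * |y|) * |F a y|) := by gcongr
      _ = M * |F a y| := by simp; field_simp
  rw [s1, integral_integral_swap (f := fun a y => |F a y|) hFi, ← integral_const_mul, ← norm_eq_abs]
  refine (norm_integral_le_integral_norm _).trans ?_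
  refine integral_mono_of_nonneg (Filter.Eventually.of_forall fun _ => norm_nonneg _)
      ?_ (Filter.Eventually.of_forall fun y => ?_)
  · exact (hFi.swap.integral_prod_left (f := fun p : ℝ × ℝ => |F p.2 p.1|)).const_mul M
  · exact s2 y

lemma cauchy_int (a : ℝ) (ha : 0 < a) :
    Integrable (fun y : ℝ => a ^ 2 / (y ^ 2 + a ^ 2)) ∧ ∫ y : ℝ, a ^ 2 / (y ^ 2 + a ^ 2) = π * a := by
  have e : (fun y : ℝ => a ^ 2 / (y ^ 2 + a ^ 2)) = fun y => (1 + (y / a) ^ 2)⁻¹ := by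
    ext y
    field_simp
    ring
  rw [e]
  refine ⟨integrable_inv_one_add_sq.comp_div ha.ne', ?_⟩
  rw [Measure.integral_comp_div (fun x => (1 + x ^ 2)⁻¹) a, integral_univ_inv_one_add_sq]
  simp [abs_of_pos ha]; ring

lemma taylor2 (δ A : ℝ) (f : ℝ → ℝ) (hδ : 0 < δ) (hf : ContDiffOn ℝ 5 f (Ioo (-δ) δ)) (f0 : f 0 = 0)
    (f1 : derivWithin f (Ioo (-δ) δ) 0 = 0)
    (f2 : ∀ x ∈ Ioo (-δ) δ, |iteratedDerivWithin 2 f (Ioo (-δ) δ) x| ≤ A) :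
    ∀ x ∈ Ioo (-δ) δ, |f x| ≤ A * x ^ 2 := by
  set s := Ioo (-δ) δ with hs
  have us : UniqueDiffOn ℝ s := uniqueDiffOn_Ioo _ _
  have h0 : (0:ℝ) ∈ s := ⟨by linarith, hδ⟩
  have hA : 0 ≤ A := (abs_nonneg _).trans (f2 0 h0)
  have cd : ContDiffOn ℝ 1 (derivWithin f s) s := hf.derivWithin us (by norm_num)
  have b1 : ∀ x ∈ s, |derivWithin f s x| ≤ A * |x| := by
    intro x hx
    have := (convex_Ioo (-δ) δ).norm_image_sub_le_of_norm_derivWithin_le (𝕜 := ℝ)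
      (f := derivWithin f s) (C := A) (x := 0) (y := x) (cd.differentiableOn (by norm_num)) ?_ h0 hx
    · simpa [f1] using this
    · intro z hz
      have := f2 z hz
      rw [iteratedDerivWithin_succ] at this
      rw [norm_eq_abs]
      convert this using 2
      apply derivWithin_congr
      · intro w hw; rw [iteratedDerivWithin_one]
      · rw [iteratedDerivWithin_one]
  intro x hx
  have hsub : uIcc 0 x ⊆ s := (ordConnected_Ioo).uIcc_subset h0 hx
  have := (convex_uIcc 0 x).norm_image_sub_le_of_norm_hasDerivWithin_le (𝕜 := ℝ)
      (f := f) (f' := derivWithin f s) (C := A * |x|) (x := 0) (y := x) ?_ ?_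
      left_mem_uIcc right_mem_uIcc
  · simp only [f0, sub_zero, norm_eq_abs] at this
    rwa [mul_assoc, abs_mul_abs_self, ← sq] at this
  · intro z hz
    exact ((hf.differentiableOn (by norm_num)) z (hsub hz)).hasDerivWithinAt.mono hsub
  · intro z hz
    refine (b1 z (hsub hz)).trans ?_
    have := abs_sub_left_of_mem_uIcc hz
    rw [sub_zero, sub_zero] at this
    exact mul_le_mul_of_nonneg_left this hA
/-- **Z-norm bound by the C¹ norm (Lemma 3.2(i), estimate (3.10)).**  For `h ∈ L²(I_δ)` which is
`C¹` on `I_{√ε/8}` with `C¹` norm at most `M` there, one has `‖h‖_Z ≲ ε · M`, i.e.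
`|∫ h · H*φ| ≤ C ε M` for every `φ ∈ C₂`, with `C` depending only on `A`, `δ` (and `ψ`). -/
theorem Znorm_le_C1norm (δ A : ℝ) (hδ : δ ∈ Ioc (0:ℝ) (1/100)) (hA : 1 ≤ A)
    (ψ : ℝ → ℝ) (hψ : IsCutoff ψ) :
    ∃ C : ℝ, 0 < C ∧
      ∀ ε : ℝ, ε ∈ Ioc (0:ℝ) (δ ^ 2 / 100) →
      ∀ f g : ℝ → ℝ, GoodFG δ A ε f g →
      ∀ h : ℝ → ℝ, Measurable h → IntegrableOn (fun x => h x ^ 2) (Ioo (-δ) δ) →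
        ContDiffOn ℝ 1 h (Ioo (-(Real.sqrt ε / 8)) (Real.sqrt ε / 8)) →
        ∀ M : ℝ,
          (∀ x ∈ Ioo (-(Real.sqrt ε / 8)) (Real.sqrt ε / 8),
            |h x| ≤ M ∧ |derivWithin h (Ioo (-(Real.sqrt ε / 8)) (Real.sqrt ε / 8)) x| ≤ M) →
          ∀ φ : ℝ → ℝ, InC2 δ ε φ →
            |∫ α : ℝ, h α * Hstar ψ ε f g φ α| ≤ C * ε * M := by
  obtain ⟨hδ0, hδ1⟩ := hδ
  obtain ⟨ψs, ψe, ψr, ψ0, -⟩ := hψ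
  refine ⟨(2 * π)⁻¹ * (π * (2 * π + 4 * A)), by positivity, ?_⟩
  rintro ε ⟨hε0, hε1⟩ f g ⟨hf, hg, f0, g0, f1, g1, hder, hlow⟩ h hm - hC1 M hM φ ⟨φC, φc, φs, φb⟩
  set s := Real.sqrt ε with hs
  have hs0 : 0 < s := Real.sqrt_pos.2 hε0
  have hss : s ^ 2 = ε := Real.sq_sqrt hε0.le
  have hsδ : s ≤ δ / 10 := by
    apply abs_le_of_sq_le_sq' _ (by positivity) |>.2
    rw [hss]; linarith [show (δ / 10) ^ 2 = δ ^ 2 / 100 by ring]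
  set ρ := s / 2 ^ 6 with hρ
  have hρ0 : 0 < ρ := by positivity
  have hρs : s = 64 * ρ := by rw [hρ]; ring
  have hρ1 : ρ ≤ 1 := by linarith
  have hM0 : 0 ≤ M := (abs_nonneg _).trans (hM 0 ⟨by linarith, by linarith⟩).1
  have inI : ∀ a, |a| ≤ ρ → a ∈ Ioo (-δ) δ := by
    intro a ha
    have := abs_le.1 ha
    constructor <;> linarith
  set X : ℝ → ℝ := (Ioo (-δ) δ).indicator (Xt ε f g) with hX
  have hXm : Measurable X := by
    have hc : ContinuousOn (Xt ε f g) (Ioo (-δ) δ) := by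
      unfold Xt
      exact (continuousOn_const.add hf.continuousOn).add hg.continuousOn
    classical
    rw [hX, ← Set.piecewise_eq_indicator]
    exact hc.measurable_piecewise continuousOn_const measurableSet_Ioo
  have hXlow : ∀ a, |a| ≤ ρ → ε ≤ X a := by
    intro a ha
    rw [hX, indicator_of_mem (inI a ha)]
    have h1 : a ∈ Ioo (-(4 * s)) (4 * s) := by
      have := abs_le.1 ha
      constructor <;> linarith
    have := hlow a h1 a h1
    unfold Xt; linarith
  have hXup : ∀ a, |a| ≤ ρ → X a ≤ 2 * ε + 2 * A * a ^ 2 := by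
    intro a ha
    rw [hX, indicator_of_mem (inI a ha)]
    have t1 := taylor2 δ A f hδ0 hf f0 f1 (fun x hx => by
      have := hder x hx 2 (by norm_num)
      linarith [abs_nonneg (iteratedDerivWithin 2 g (Ioo (-δ) δ) x)]) a (inI a ha)
    have t2 := taylor2 δ A g hδ0 hg g0 g1 (fun x hx => by
      have := hder x hx 2 (by norm_num)
      linarith [abs_nonneg (iteratedDerivWithin 2 f (Ioo (-δ) δ) x)]) a (inI a ha)
    unfold Xt
    linarith [le_abs_self (f a), le_abs_self (g a)]
  have ψz : ∀ a, ρ < |a| → ψ (a / ρ) = 0 := by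
    intro a ha
    apply ψ0
    rw [abs_div, abs_of_pos hρ0, lt_div_iff₀ hρ0]; linarith
  have ψcont : Continuous ψ := ψs.continuous
  set P : ℝ → ℝ := fun a => φ a * ψ (a / ρ) with hP
  have hPC : ContDiff ℝ 1 P :=
    φC.mul ((ψs.of_le (by exact_mod_cast le_top)).comp (contDiff_id.div_const ρ))
  have hPc : HasCompactSupport P := φc.mul_right
  have hPm : Measurable P := hPC.continuous.measurable
  obtain ⟨Lp, hLp⟩ := hPC.lipschitzWith_of_hasCompactSupport hPc (by norm_num)
  have hPz : ∀ a, ρ < |a| → P a = 0 := fun a ha => by simp [hP, ψz a ha]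
  have hPφ : ∀ a, |P a| ≤ |φ a| := by
    intro a
    simp only [hP, abs_mul]
    have := ψr (a / ρ)
    rw [abs_of_nonneg this.1]
    exact mul_le_of_le_one_right (abs_nonneg _) this.2
  have hPB : ∀ a, |a| ≤ ρ → |P a| ≤ ε / (a ^ 2 + ε ^ 2) := by
    intro a ha
    have := (φb a (inI a ha)).1
    rw [sq_abs, add_comm] at this
    exact (hPφ a).trans this
  have hPB' : ∀ a, |P a| ≤ 1 / ε := by
    intro a
    by_cases ha : ρ < |a|
    · rw [hPz a ha]; simp; positivity
    · refine (hPB a (not_lt.1 ha)).trans ?_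
      rw [div_le_div_iff₀ (by positivity) hε0]
      nlinarith [sq_nonneg a]
  set t : ℝ → ℝ → ℝ := fun a y => X a ^ 2 / (y ^ 2 + X a ^ 2) with ht
  have ht0 : ∀ a y, 0 ≤ t a y := fun a y => by simp only [ht]; positivity
  have ht1 : ∀ a y, t a y ≤ 1 := fun a y => by
    simp only [ht]
    exact div_le_one_of_le₀ (by nlinarith [sq_nonneg y]) (by positivity)
  set F : ℝ → ℝ → ℝ := fun a y => P a * t a y * ψ (y / ρ) with hF
  have hFm : Measurable (uncurry F) := by
    have a1 : Measurable fun p : ℝ × ℝ => P p.1 := hPm.comp measurable_fst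
    have a2 : Measurable fun p : ℝ × ℝ => X p.1 := hXm.comp measurable_fst
    have a3 : Measurable fun p : ℝ × ℝ => ψ (p.2 / ρ) :=
      ψcont.measurable.comp (measurable_snd.div_const ρ)
    exact (a1.mul ((a2.pow_const 2).div ((measurable_snd.pow_const 2).add (a2.pow_const 2)))).mul a3
  have hψabs : ∀ x, |ψ x| ≤ 1 := fun x => by rw [abs_of_nonneg (ψr x).1]; exact (ψr x).2
  have hFt : ∀ a y, |F a y| ≤ |P a| * t a y := by
    intro a y
    simp only [hF, abs_mul]
    rw [abs_of_nonneg (ht0 a y)]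
    exact mul_le_of_le_one_right (mul_nonneg (abs_nonneg _) (ht0 a y)) (hψabs _)
  have hFB : ∀ a y, |F a y| ≤ 1 / ε := fun a y =>
    (hFt a y).trans ((mul_le_of_le_one_right (abs_nonneg _) (ht1 a y)).trans (hPB' a))
  have hPt : ∀ a y, |P a * t a y - P a| ≤ 1 / ε * (|y| / ε) := by
    intro a y
    by_cases ha : ρ < |a|
    · rw [hPz a ha]; simp; positivity
    · have hx := hXlow a (not_lt.1 ha)
      have hx0 : 0 < X a := hε0.trans_le hx
      have e : P a * t a y - P a = P a * (-(y ^ 2 / (y ^ 2 + X a ^ 2))) := by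
        have : y ^ 2 + X a ^ 2 ≠ 0 := by positivity
        simp only [ht]; field_simp; ring
      rw [e, abs_mul, abs_neg]
      refine mul_le_mul (hPB' a) ?_ (abs_nonneg _) (by positivity)
      rw [abs_of_nonneg (by positivity), div_le_div_iff₀ (by positivity) hε0, ← sq_abs y]
      have : |y| * ε ≤ |y| ^ 2 + X a ^ 2 := by nlinarith [sq_nonneg (|y| - ε), abs_nonneg y]
      nlinarith [abs_nonneg y]
  have hFL : ∀ b y, |F (b + y) y - F (b - y) y| ≤ (2 / ε ^ 2 + 2 * Lp) * |y| := by
    intro b y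
    have e : F (b + y) y - F (b - y) y =
        ((P (b + y) * t (b + y) y - P (b + y)) - (P (b - y) * t (b - y) y - P (b - y))
          + (P (b + y) - P (b - y))) * ψ (y / ρ) := by simp only [hF]; ring
    rw [e, abs_mul]
    refine (mul_le_of_le_one_right (abs_nonneg _) (hψabs _)).trans ?_
    have l1 := hPt (b + y) y
    have l2 := hPt (b - y) y
    have l3 := hLp.dist_le_mul (b + y) (b - y)
    rw [Real.dist_eq, Real.dist_eq, show b + y - (b - y) = 2 * y by ring, abs_mul, abs_two] at l3
    refine (abs_add_le _ _).trans ?_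
    have l4 := abs_sub (P (b + y) * t (b + y) y - P (b + y)) (P (b - y) * t (b - y) y - P (b - y))
    have e2 : (2 / ε ^ 2 + 2 * (Lp : ℝ)) * |y| = 2 * (1 / ε * (|y| / ε)) + Lp * (2 * |y|) := by
      field_simp
    rw [e2]; linarith
  have in8 : ∀ x, |x| ≤ 2 * ρ → x ∈ Ioo (-(s / 8)) (s / 8) := by
    intro x hx
    have := abs_le.1 hx
    constructor <;> linarith
  have hcore := core F hFm (1 / ε) (2 / ε ^ 2 + 2 * Lp) ρ M hM0 hFB
    (fun a y ha => by simp [hF, hPz a ha]) (fun a y hy => by simp [hF, ψz y hy])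
    (fun a y => by simp only [hF, ht, neg_div, ψe, neg_sq]) hFL h hm
    (fun x hx => (hM x (in8 x hx)).1) (by
      intro a y ha hy
      have h1 : |a - y| ≤ 2 * ρ := (abs_sub a y).trans (by linarith)
      have h2 : |a + y| ≤ 2 * ρ := (abs_add_le a y).trans (by linarith)
      have := (convex_Ioo (-(s/8)) (s/8)).norm_image_sub_le_of_norm_derivWithin_le (𝕜 := ℝ)
        (f := h) (C := M) (hC1.differentiableOn (by norm_num)) (fun x hx => (hM x hx).2)
        (in8 _ h2) (in8 _ h1)
      rw [norm_eq_abs, norm_eq_abs, show a - y - (a + y) = -(2 * y) by ring, abs_neg, abs_mul,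
        abs_two] at this
      linarith)
  have hint : ∫ a, ∫ y, |F a y| ≤ π * (2 * π + 4 * A) * ε := by
    have hci := cauchy_int ε hε0
    have hbi : Integrable ((Icc (-ρ) ρ).indicator (fun _ => 2 * A * ε)) := by
      rw [integrable_indicator_iff measurableSet_Icc]
      exact integrableOn_const (by simp)
    calc ∫ a, ∫ y, |F a y|
        ≤ ∫ a, π * (2 * (ε ^ 2 / (a ^ 2 + ε ^ 2)) + (Icc (-ρ) ρ).indicator (fun _ => 2 * A * ε) a) := by
          refine integral_mono_of_nonneg
            (Filter.Eventually.of_forall fun a => integral_nonneg fun y => abs_nonneg _)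
            (((hci.1.const_mul 2).add hbi).const_mul π) (Filter.Eventually.of_forall fun a => ?_)
          by_cases ha : ρ < |a|
          · have : ∀ y, F a y = 0 := fun y => by simp [hF, hPz a ha]
            simp only [this, abs_zero, integral_zero]
            refine mul_nonneg pi_pos.le (add_nonneg (by positivity) ?_)
            exact indicator_nonneg (fun _ _ => by positivity) a
          · have ha' := not_lt.1 ha
            have hx := hXlow a ha'
            have hx0 : 0 < X a := hε0.trans_le hx
            have hcx := cauchy_int (X a) hx0
            have hin : a ∈ Icc (-ρ) ρ := abs_le.1 ha'
            simp only [indicator_of_mem hin]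
            calc ∫ y, |F a y| ≤ ∫ y, |P a| * (X a ^ 2 / (y ^ 2 + X a ^ 2)) :=
                  integral_mono_of_nonneg (Filter.Eventually.of_forall fun y => abs_nonneg _)
                    (hcx.1.const_mul _) (Filter.Eventually.of_forall fun y => hFt a y)
              _ = |P a| * (π * X a) := by rw [integral_const_mul, hcx.2]
              _ ≤ ε / (a ^ 2 + ε ^ 2) * (π * (2 * ε + 2 * A * a ^ 2)) := by
                  have := hPB a ha'
                  have := hXup a ha'
                  gcongr
              _ ≤ π * (2 * (ε ^ 2 / (a ^ 2 + ε ^ 2)) + 2 * A * ε) := by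
                  have e : ε / (a ^ 2 + ε ^ 2) * (π * (2 * ε + 2 * A * a ^ 2))
                    = π * (2 * (ε ^ 2 / (a ^ 2 + ε ^ 2)) + 2 * A * ε * (a ^ 2 / (a ^ 2 + ε ^ 2))) := by
                    field_simp
                  rw [e]
                  have : a ^ 2 / (a ^ 2 + ε ^ 2) ≤ 1 :=
                    div_le_one_of_le₀ (by nlinarith [sq_nonneg ε]) (by positivity)
                  have h3 : 2 * A * ε * (a ^ 2 / (a ^ 2 + ε ^ 2)) ≤ 2 * A * ε :=
                    mul_le_of_le_one_right (by positivity) this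
                  gcongr
      _ = π * (2 * (π * ε) + 2 * ρ * (2 * A * ε)) := by
          rw [integral_const_mul, integral_add (hci.1.const_mul 2) hbi, integral_const_mul, hci.2,
            integral_indicator measurableSet_Icc]
          simp [Measure.real, hρ0.le]
          left; ring
      _ ≤ π * (2 * π + 4 * A) * ε := by
          have : ρ * (A * ε) ≤ A * ε := mul_le_of_le_one_left (by positivity) hρ1
          nlinarith [pi_pos]
  have hH : ∀ β, h β * Hstar ψ ε f g φ β
      = (2 * π)⁻¹ * (h β * pvI (fun α => (α - β)⁻¹ * F α (α - β)) β) := by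
    intro β
    have : (fun α => Hker ψ ε f g α β * φ α) = fun α => (α - β)⁻¹ * F α (α - β) := by
      ext α
      by_cases ha : ρ < |α|
      · simp [Hker, scut, hF, hP, ← hs, ← hρ, ψz α ha]
      · have : X α = Xt ε f g α := by rw [hX, indicator_of_mem (inI α (not_lt.1 ha))]
        simp only [Hker, scut, hF, hP, ht, ← hs, ← hρ, this]; ring
    unfold Hstar
    rw [this]; ring
  simp_rw [hH]
  rw [integral_const_mul, abs_mul, abs_of_nonneg (by positivity)]
  calc _ ≤ (2 * π)⁻¹ * (M * (π * (2 * π + 4 * A) * ε)) := by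
        refine mul_le_mul_of_nonneg_left (hcore.trans ?_) (by positivity)
        exact mul_le_mul_of_nonneg_left hint hM0
    _ = _ := by ring
end
end

section
/- M* preserves the class C₂ up to a constant (Lemma 3.2(ii), estimate (pi12)): There exists a constant A₁ > 0 depending only on A and δ such that A₁⁻¹ M*φ ∈ C₂ for every φ ∈ C₂; in particular, for every φ ∈ C₂ and every β with |β| ≤ √ε, one has |M*φ(β)| ≲ ε/(ε² + β²) and |(M*φ)'(β)| ≲ ε/(ε³ + |β|³). -/
noncomputable section
open Set MeasureTheory Filter Real

lemma aux_int (ε : ℝ) (hε : 0 < ε) (b : ℝ) :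
    Integrable (fun x : ℝ => ε / ((x - b) ^ 2 + ε ^ 2)) ∧
    ∫ x : ℝ, ε / ((x - b) ^ 2 + ε ^ 2) = π := by
  have h1 : ∀ x : ℝ, ε / ((x - b) ^ 2 + ε ^ 2) = ε⁻¹ * (fun y => (1 + (y / ε) ^ 2)⁻¹) (x - b) := by
    intro x
    have : 0 < (x - b) ^ 2 + ε ^ 2 := by positivity
    have : 0 < 1 + ((x - b) / ε) ^ 2 := by positivity
    simp only
    field_simp
    ring
  simp_rw [h1]
  constructor
  · apply Integrable.const_mul
    apply Integrable.comp_sub_right (f := fun y : ℝ => (1 + (y / ε) ^ 2)⁻¹)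
    exact (integrable_inv_one_add_sq).comp_div hε.ne'
  · rw [integral_const_mul, integral_sub_right_eq_self (fun y : ℝ => (1 + (y / ε) ^ 2)⁻¹),
      Measure.integral_comp_div (fun y : ℝ => (1 + y ^ 2)⁻¹), integral_univ_inv_one_add_sq,
      abs_of_pos hε, smul_eq_mul]
    field_simp

lemma aux_bound (ε : ℝ) (hε : 0 < ε) (b C : ℝ) (F : ℝ → ℝ)
    (h : ∀ x, |F x| ≤ C * (ε / ((x - b) ^ 2 + ε ^ 2) + ε / (x ^ 2 + ε ^ 2))) :
    |∫ x, F x| ≤ C * (2 * π) := by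
  obtain ⟨i1, e1⟩ := aux_int ε hε b
  obtain ⟨i2, e2⟩ := aux_int ε hε 0
  simp only [sub_zero] at i2 e2
  have := norm_integral_le_of_norm_le (f := F)
    (g := fun x => C * (ε / ((x - b) ^ 2 + ε ^ 2) + ε / (x ^ 2 + ε ^ 2)))
    ((i1.add i2).const_mul C) (ae_of_all _ h)
  rw [integral_const_mul, integral_add i1 i2, e1, e2] at this
  simpa [two_mul] using this

def kk (ψ Y : ℝ → ℝ) (r a b : ℝ) : ℝ := Y a / ((a - b) ^ 2 + Y a ^ 2) * ψ ((a - b) / r)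

def kb (ψ Y : ℝ → ℝ) (r a b : ℝ) : ℝ :=
  2 * (a - b) * Y a / ((a - b) ^ 2 + Y a ^ 2) ^ 2 * ψ ((a - b) / r)
    - Y a / ((a - b) ^ 2 + Y a ^ 2) * (deriv ψ ((a - b) / r) / r)

def ky (ψ Y : ℝ → ℝ) (r a b : ℝ) : ℝ :=
  deriv Y a * (((a - b) ^ 2 - Y a ^ 2) / ((a - b) ^ 2 + Y a ^ 2) ^ 2) * ψ ((a - b) / r)

lemma kk_deriv_b (ψ Y : ℝ → ℝ) (hψ : Differentiable ℝ ψ) (hY : ∀ a, 0 < Y a) (r a b : ℝ) :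
    HasDerivAt (fun b => kk ψ Y r a b) (kb ψ Y r a b) b := by
  have hp : 0 < (a - b) ^ 2 + Y a ^ 2 := by have := hY a; positivity
  have ht : HasDerivAt (fun b => a - b) (-1) b := by
    simpa using (hasDerivAt_id b).const_sub a
  have h1 := ((hasDerivAt_const b (Y a)).div ((ht.pow 2).add_const (Y a ^ 2)) hp.ne')
  have h2 := HasDerivAt.comp b (hψ ((a - b) / r)).hasDerivAt (ht.div_const r)
  refine (h1.mul h2).congr_deriv ?_
  simp only [kb, Pi.pow_apply, Function.comp_apply, Pi.div_apply]
  field_simp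
  push_cast
  ring

lemma kk_deriv_a (ψ Y : ℝ → ℝ) (hψ : Differentiable ℝ ψ) (hY : ∀ a, 0 < Y a)
    (hYd : Differentiable ℝ Y) (r a b : ℝ) :
    HasDerivAt (fun a => kk ψ Y r a b) (- kb ψ Y r a b + ky ψ Y r a b) a := by
  have hp : 0 < (a - b) ^ 2 + Y a ^ 2 := by have := hY a; positivity
  have ht : HasDerivAt (fun a => a - b) 1 a := by
    simpa using (hasDerivAt_id a).sub_const b
  have hy := (hYd a).hasDerivAt
  have h1 := hy.div ((ht.pow 2).add (hy.pow 2)) hp.ne'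
  have h2 := HasDerivAt.comp a (hψ ((a - b) / r)).hasDerivAt (ht.div_const r)
  refine (h1.mul h2).congr_deriv ?_
  simp only [kb, ky, Pi.pow_apply, Function.comp_apply, Pi.div_apply, Pi.add_apply]
  field_simp
  push_cast
  ring

lemma kk_cont (ψ Y : ℝ → ℝ) (hψ : ContDiff ℝ 1 ψ) (hY : ∀ a, 0 < Y a)
    (hYd : ContDiff ℝ 1 Y) (r : ℝ) :
    Continuous (fun p : ℝ × ℝ => kk ψ Y r p.1 p.2) ∧
    Continuous (fun p : ℝ × ℝ => kb ψ Y r p.1 p.2) ∧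
    Continuous (fun p : ℝ × ℝ => ky ψ Y r p.1 p.2) := by
  have c1 := hψ.continuous
  have c2 := hψ.continuous_deriv le_rfl
  have c3 := hYd.continuous
  have c4 := hYd.continuous_deriv le_rfl
  have hp : ∀ p : ℝ × ℝ, (p.1 - p.2) ^ 2 + Y p.1 ^ 2 ≠ 0 := fun p => by
    have := hY p.1; positivity
  have hp2 : ∀ p : ℝ × ℝ, ((p.1 - p.2) ^ 2 + Y p.1 ^ 2) ^ 2 ≠ 0 := fun p => pow_ne_zero _ (hp p)
  have d1 : Continuous (fun p : ℝ × ℝ => ψ ((p.1 - p.2) / r)) := by fun_prop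
  have d2 : Continuous (fun p : ℝ × ℝ => deriv ψ ((p.1 - p.2) / r) / r) :=
    (c2.comp (by fun_prop)).div_const r
  have d3 : Continuous (fun p : ℝ × ℝ => Y p.1 / ((p.1 - p.2) ^ 2 + Y p.1 ^ 2)) :=
    Continuous.div (by fun_prop) (by fun_prop) hp
  have d4 : Continuous (fun p : ℝ × ℝ => deriv Y p.1) := c4.comp continuous_fst
  refine ⟨d3.mul d1, Continuous.sub ((Continuous.div (by fun_prop) (by fun_prop) hp2).mul d1)
    (d3.mul d2), (d4.mul (Continuous.div (by fun_prop) (by fun_prop) hp2)).mul d1⟩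

/-- pointwise kernel bounds -/
lemma kern_bounds (t y ε B : ℝ) (hε : 0 < ε) (h1 : ε ≤ y) (h2 : y ≤ B * ε) :
    0 ≤ y / (t ^ 2 + y ^ 2) ∧ y / (t ^ 2 + y ^ 2) ≤ B * (ε / (t ^ 2 + ε ^ 2)) ∧
    |2 * t * y / (t ^ 2 + y ^ 2) ^ 2| ≤ 1 / ε * (ε / (t ^ 2 + ε ^ 2)) ∧
    |2 * t * y / (t ^ 2 + y ^ 2) ^ 2| * |t| ^ 3 ≤ 2 * B * ε ∧
    |(t ^ 2 - y ^ 2) / (t ^ 2 + y ^ 2) ^ 2| ≤ 1 / ε * (ε / (t ^ 2 + ε ^ 2)) := by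
  have hy : 0 < y := by linarith
  have hq : 0 < t ^ 2 + y ^ 2 := by positivity
  have hq' : 0 < t ^ 2 + ε ^ 2 := by positivity
  have hle : t ^ 2 + ε ^ 2 ≤ t ^ 2 + y ^ 2 := by gcongr
  have e1 : 1 / ε * (ε / (t ^ 2 + ε ^ 2)) = 1 / (t ^ 2 + ε ^ 2) := by field_simp
  have hi : 1 / (t ^ 2 + y ^ 2) ≤ 1 / (t ^ 2 + ε ^ 2) := one_div_le_one_div_of_le hq' hle
  rw [e1]
  have ht : |t| ^ 2 = t ^ 2 := sq_abs t
  refine ⟨by positivity, ?_, ?_, ?_, ?_⟩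
  · calc y / (t ^ 2 + y ^ 2) ≤ B * ε / (t ^ 2 + ε ^ 2) := by gcongr; nlinarith
      _ = _ := by ring
  · refine le_trans ?_ hi
    rw [abs_div, abs_of_pos (by positivity : 0 < (t ^ 2 + y ^ 2) ^ 2), div_le_div_iff₀ (by positivity) hq,
      one_mul, sq (t ^ 2 + y ^ 2)]
    gcongr
    rw [abs_mul, abs_mul, abs_of_pos hy]
    norm_num
    nlinarith [sq_nonneg (|t| - y)]
  · rw [abs_div, abs_of_pos (by positivity : 0 < (t ^ 2 + y ^ 2) ^ 2), div_mul_eq_mul_div,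
      div_le_iff₀ (by positivity), abs_mul, abs_mul, abs_of_pos hy]
    norm_num
    have : |t| ^ 4 ≤ (t ^ 2 + y ^ 2) ^ 2 := by
      rw [show |t| ^ 4 = (|t| ^ 2) ^ 2 by ring, ht]
      gcongr; nlinarith
    calc 2 * |t| * y * |t| ^ 3 = 2 * y * |t| ^ 4 := by ring
      _ ≤ 2 * (B * ε) * (t ^ 2 + y ^ 2) ^ 2 := by gcongr; linarith
      _ = _ := by ring
  · refine le_trans ?_ hi
    rw [abs_div, abs_of_pos (by positivity : 0 < (t ^ 2 + y ^ 2) ^ 2), div_le_div_iff₀ (by positivity) hq,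
      one_mul, sq (t ^ 2 + y ^ 2)]
    gcongr
    rw [abs_le]; constructor <;> nlinarith
structure Core (ψ Y u : ℝ → ℝ) (w ε B D L E : ℝ) : Prop where
  hw : 0 < w
  hw1 : w ≤ 1
  he : ε = w ^ 2
  hB : 1 ≤ B
  hD : 0 ≤ D
  hL : 0 ≤ L
  hE : 0 ≤ E
  cψ : ContDiff ℝ 1 ψ
  ψ0 : ∀ x, 0 ≤ ψ x
  ψ1 : ∀ x, ψ x ≤ 1
  ψz : ∀ x, 1 < |x| → ψ x = 0
  ψo : ∀ x, |x| ≤ 1 / 2 → ψ x = 1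
  ψd : ∀ x, |deriv ψ x| ≤ L
  cY : ContDiff ℝ 1 Y
  Yl : ∀ x, ε ≤ Y x
  Yu : ∀ x, Y x ≤ B * ε
  Yd : ∀ x, |deriv Y x| ≤ D * w
  cu : ContDiff ℝ 1 u
  uz : ∀ x, w / 64 < |x| → u x = 0
  ub : ∀ x, |u x| ≤ ε / (x ^ 2 + ε ^ 2)
  ud : ∀ x, |deriv u x| ≤ E * (ε / (ε ^ 3 + |x| ^ 3))

namespace Core
variable {ψ Y u : ℝ → ℝ} {w ε B D L E : ℝ}

lemma epos (h : Core ψ Y u w ε B D L E) : 0 < ε := by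
  have := h.hw; rw [h.he]; positivity

lemma ele (h : Core ψ Y u w ε B D L E) : ε ≤ w := by
  have := h.hw; have := h.hw1; rw [h.he]; nlinarith

lemma Ypos (h : Core ψ Y u w ε B D L E) (a : ℝ) : 0 < Y a := h.epos.trans_le (h.Yl a)

lemma ucs (h : Core ψ Y u w ε B D L E) : HasCompactSupport u := by
  refine HasCompactSupport.intro (K := Icc (-(w / 64)) (w / 64)) isCompact_Icc fun x hx => h.uz x ?_
  by_contra hh
  exact hx (abs_le.1 (not_lt.1 hh))

lemma kkb (h : Core ψ Y u w ε B D L E) (a b : ℝ) :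
    |kk ψ Y (w / 64) a b| ≤ B * (ε / ((a - b) ^ 2 + ε ^ 2)) := by
  obtain ⟨k0, k1, -⟩ := kern_bounds (a - b) (Y a) ε B h.epos (h.Yl a) (h.Yu a)
  have := h.ψ0 ((a - b) / (w / 64))
  have := h.ψ1 ((a - b) / (w / 64))
  rw [kk, abs_of_nonneg (by positivity)]
  nlinarith

lemma kyb (h : Core ψ Y u w ε B D L E) (a b : ℝ) :
    |ky ψ Y (w / 64) a b| ≤ D / w * (ε / ((a - b) ^ 2 + ε ^ 2)) := by
  obtain ⟨-, -, -, -, k1⟩ := kern_bounds (a - b) (Y a) ε B h.epos (h.Yl a) (h.Yu a)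
  have h0 := h.ψ0 ((a - b) / (w / 64))
  have h1 := h.ψ1 ((a - b) / (w / 64))
  have hd := h.Yd a
  have hw := h.hw
  have hD := h.hD
  have hε := h.epos
  rw [ky, abs_mul, abs_mul, abs_of_nonneg h0]
  calc _ ≤ D * w * (1 / ε * (ε / ((a - b) ^ 2 + ε ^ 2))) * 1 := by gcongr
    _ = _ := by
      have : (a - b) ^ 2 + ε ^ 2 ≠ 0 := by positivity
      rw [show D / w = D * w * (1 / ε) by rw [h.he]; field_simp]
      ring

lemma kpd (h : Core ψ Y u w ε B D L E) (a b : ℝ) :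
    |Y a / ((a - b) ^ 2 + Y a ^ 2) * (deriv ψ ((a - b) / (w / 64)) / (w / 64))| ≤
      64 * B * L / w * (ε / ((a - b) ^ 2 + ε ^ 2)) := by
  obtain ⟨k0, k1, -⟩ := kern_bounds (a - b) (Y a) ε B h.epos (h.Yl a) (h.Yu a)
  have hw := h.hw
  have hB : 0 ≤ B := by linarith [h.hB]
  have hε := h.epos
  have hd := h.ψd ((a - b) / (w / 64))
  rw [abs_mul, abs_of_nonneg k0, abs_div, abs_of_pos (by positivity : 0 < w / 64)]
  calc _ ≤ B * (ε / ((a - b) ^ 2 + ε ^ 2)) * (L / (w / 64)) := by gcongr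
    _ = _ := by field_simp

lemma kbb (h : Core ψ Y u w ε B D L E) (a b : ℝ) :
    |kb ψ Y (w / 64) a b| ≤ (1 + 64 * B * L) / ε * (ε / ((a - b) ^ 2 + ε ^ 2)) := by
  obtain ⟨-, -, k1, -⟩ := kern_bounds (a - b) (Y a) ε B h.epos (h.Yl a) (h.Yu a)
  have h0 := h.ψ0 ((a - b) / (w / 64))
  have h1 := h.ψ1 ((a - b) / (w / 64))
  have hw := h.hw
  have hB : 0 ≤ B := by linarith [h.hB]
  have hL := h.hL
  have hε := h.epos
  rw [kb]
  refine (abs_sub _ _).trans ?_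
  rw [abs_mul _ (ψ _), abs_of_nonneg h0]
  calc _ ≤ (1 / ε * (ε / ((a - b) ^ 2 + ε ^ 2))) * 1 + 64 * B * L / w * (ε / ((a - b) ^ 2 + ε ^ 2)) :=
        add_le_add (by gcongr) (h.kpd a b)
    _ ≤ (1 / ε * (ε / ((a - b) ^ 2 + ε ^ 2))) * 1 + 64 * B * L / ε * (ε / ((a - b) ^ 2 + ε ^ 2)) := by
        gcongr
        exact h.ele
    _ = _ := by ring

lemma Ple (h : Core ψ Y u w ε B D L E) (x : ℝ) : ε / (x ^ 2 + ε ^ 2) ≤ 1 / ε := by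
  have hε := h.epos
  rw [div_le_div_iff₀ (by positivity) hε]
  nlinarith [sq_nonneg x]

lemma hasDeriv (h : Core ψ Y u w ε B D L E) :
    (∀ b, HasDerivAt (fun b => ∫ a, kk ψ Y (w / 64) a b * u a)
      (∫ a, kb ψ Y (w / 64) a b * u a) b) ∧
    Continuous (fun b => ∫ a, kb ψ Y (w / 64) a b * u a) := by
  obtain ⟨c1, c2, -⟩ := kk_cont ψ Y h.cψ h.Ypos h.cY (w / 64)
  have cu := h.cu.continuous
  have hε := h.epos
  have hB : 0 ≤ B := by linarith [h.hB]
  have hL := h.hL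
  have d1 : ∀ b, Continuous (fun a => kk ψ Y (w / 64) a b * u a) := fun b =>
    (c1.comp (Continuous.prodMk_left b)).mul cu
  have d2 : ∀ b, Continuous (fun a => kb ψ Y (w / 64) a b * u a) := fun b =>
    (c2.comp (Continuous.prodMk_left b)).mul cu
  have d3 : ∀ a, Continuous (fun b => kb ψ Y (w / 64) a b * u a) := fun a =>
    (c2.comp (Continuous.prodMk_right a)).mul continuous_const
  have hbd : ∀ a b, ‖kb ψ Y (w / 64) a b * u a‖ ≤ (1 + 64 * B * L) / ε * (1 / ε) * |u a| := by
    intro a b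
    rw [norm_mul, Real.norm_eq_abs, Real.norm_eq_abs]
    gcongr
    exact (h.kbb a b).trans (mul_le_mul_of_nonneg_left (h.Ple _) (by positivity))
  have hbi : Integrable (fun a => (1 + 64 * B * L) / ε * (1 / ε) * |u a|) :=
    ((cu.integrable_of_hasCompactSupport h.ucs).abs).const_mul _
  constructor
  · intro b
    refine (hasDerivAt_integral_of_dominated_loc_of_deriv_le (s := univ) univ_mem
      (Eventually.of_forall fun x => (d1 x).aestronglyMeasurable)
      ((d1 b).integrable_of_hasCompactSupport h.ucs.mul_left)
      (F' := fun b a => kb ψ Y (w / 64) a b * u a)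
      (d2 b).aestronglyMeasurable (ae_of_all _ fun a x _ => hbd a x) hbi
      (ae_of_all _ fun a x _ => ?_)).2
    exact (kk_deriv_b ψ Y (h.cψ.differentiable one_ne_zero) h.Ypos _ a x).mul_const _
  · exact continuous_of_dominated (fun b => (d2 b).aestronglyMeasurable)
      (fun b => ae_of_all _ fun a => hbd a b) hbi (ae_of_all _ d3)

lemma Nbound (h : Core ψ Y u w ε B D L E) (b : ℝ) :
    |∫ a, kk ψ Y (w / 64) a b * u a| ≤ 4 * B * (ε / (ε ^ 2 + b ^ 2)) * (2 * π) := by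
  have hε := h.epos
  have hB : 0 ≤ B := by linarith [h.hB]
  apply aux_bound ε hε b
  intro a
  rw [abs_mul]
  have h1 : |kk ψ Y (w / 64) a b| * |u a| ≤
    B * (ε / ((a - b) ^ 2 + ε ^ 2)) * (ε / (a ^ 2 + ε ^ 2)) :=
      mul_le_mul (h.kkb a b) (h.ub a) (abs_nonneg _) (by positivity)
  refine h1.trans ?_
  have key : ∀ x : ℝ, |b| / 2 ≤ |x| → ε / (x ^ 2 + ε ^ 2) ≤ 4 * (ε / (ε ^ 2 + b ^ 2)) := by
    intro x hx
    have : (|b| / 2) ^ 2 ≤ |x| ^ 2 := by gcongr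
    rw [div_pow, sq_abs, sq_abs] at this
    rw [← mul_div_assoc, div_le_div_iff₀ (by positivity) (by positivity)]
    nlinarith [sq_nonneg ε]
  have p1 : 0 ≤ ε / ((a - b) ^ 2 + ε ^ 2) := by positivity
  have p2 : 0 ≤ ε / (a ^ 2 + ε ^ 2) := by positivity
  have p3 : 0 ≤ ε / (ε ^ 2 + b ^ 2) := by positivity
  rw [mul_assoc, mul_comm 4 B, mul_assoc, mul_assoc]
  refine mul_le_mul_of_nonneg_left ?_ hB
  rcases le_total (|b| / 2) |a| with hx | hx
  · have := key a hx
    nlinarith [mul_nonneg p3 p2]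
  · have := key (a - b) (by
      have := abs_sub_abs_le_abs_sub b a
      rw [abs_sub_comm] at this; linarith)
    nlinarith [mul_nonneg p3 p1]

lemma Dbound1 (h : Core ψ Y u w ε B D L E) (b : ℝ) (hb : |b| ≤ ε) :
    |∫ a, kb ψ Y (w / 64) a b * u a| ≤ 2 * (1 + 64 * B * L) * (ε / (ε ^ 3 + |b| ^ 3)) * (2 * π) := by
  have hε := h.epos
  have hB : 0 ≤ B := by linarith [h.hB]
  have hL := h.hL
  apply aux_bound ε hε b
  intro a
  rw [abs_mul]
  have h1 : |kb ψ Y (w / 64) a b| * |u a| ≤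
    (1 + 64 * B * L) / ε * (ε / ((a - b) ^ 2 + ε ^ 2)) * (1 / ε) :=
      mul_le_mul (h.kbb a b) ((h.ub a).trans (h.Ple a)) (abs_nonneg _) (by positivity)
  refine h1.trans ?_
  have p1 : 0 ≤ ε / ((a - b) ^ 2 + ε ^ 2) := by positivity
  have p2 : 0 ≤ ε / (a ^ 2 + ε ^ 2) := by positivity
  have p3 : 1 / ε ^ 2 ≤ 2 * (ε / (ε ^ 3 + |b| ^ 3)) := by
    have : |b| ^ 3 ≤ ε ^ 3 := by gcongr
    rw [← mul_div_assoc, div_le_div_iff₀ (by positivity) (by positivity)]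
    nlinarith
  calc _ = (1 + 64 * B * L) * (1 / ε ^ 2) * (ε / ((a - b) ^ 2 + ε ^ 2)) := by field_simp
    _ ≤ (1 + 64 * B * L) * (2 * (ε / (ε ^ 3 + |b| ^ 3))) *
        (ε / ((a - b) ^ 2 + ε ^ 2) + ε / (a ^ 2 + ε ^ 2)) := by
        gcongr; linarith
    _ = _ := by ring

lemma dψ0 (h : Core ψ Y u w ε B D L E) (x : ℝ) (hx : |x| < 1 / 2) : deriv ψ x = 0 := by
  have : ψ =ᶠ[nhds x] fun _ => 1 := by
    filter_upwards [(continuous_abs.continuousAt (x := x)).eventually_lt_const hx] with y hy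
    exact h.ψo y hy.le
  rw [this.deriv_eq]; simp

/-- the two-region pointwise bounds -/
lemma T1 (h : Core ψ Y u w ε B D L E) (a b : ℝ) (hb : 0 < |b|) (hbw : |b| ≤ w) :
    |kb ψ Y (w / 64) a b * (ψ (a / (|b| / 2)) * u a)| ≤
      (16 * B + 256 * B * L) * (ε / |b| ^ 3) * (ε / (a ^ 2 + ε ^ 2)) := by
  have hε := h.epos
  have hB : 0 ≤ B := by linarith [h.hB]
  have hL := h.hL
  have hw := h.hw
  rcases lt_or_ge 1 |a / (|b| / 2)| with hc | hc
  · rw [h.ψz _ hc]; simp only [zero_mul, mul_zero, abs_zero]; positivity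
  have hc' : |a| ≤ |b| / 2 := by
    rw [abs_div, abs_of_pos (by positivity : 0 < |b| / 2), div_le_one (by positivity)] at hc
    exact hc
  have ht : |b| / 2 ≤ |a - b| := by
    have := abs_sub_abs_le_abs_sub b a
    rw [abs_sub_comm] at this; linarith
  have htp : 0 < |a - b| := by linarith
  obtain ⟨-, -, -, k1, -⟩ := kern_bounds (a - b) (Y a) ε B h.epos (h.Yl a) (h.Yu a)
  have h0 := h.ψ0 ((a - b) / (w / 64))
  have h1 := h.ψ1 ((a - b) / (w / 64))
  have g0 := h.ψ0 (a / (|b| / 2))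
  have g1 := h.ψ1 (a / (|b| / 2))
  have e1 : |2 * (a - b) * Y a / ((a - b) ^ 2 + Y a ^ 2) ^ 2| ≤ 16 * B * (ε / |b| ^ 3) := by
    rw [← le_div_iff₀ (by positivity)] at k1
    refine k1.trans ?_
    calc 2 * B * ε / |a - b| ^ 3 ≤ 2 * B * ε / (|b| / 2) ^ 3 := by gcongr
      _ = _ := by field_simp; ring
  have e2 : ε / ((a - b) ^ 2 + ε ^ 2) ≤ 4 * (ε / |b| ^ 2) := by
    calc ε / ((a - b) ^ 2 + ε ^ 2) ≤ ε / (|b| / 2) ^ 2 := by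
          gcongr
          have : (|b| / 2) ^ 2 ≤ |a - b| ^ 2 := by gcongr
          rw [sq_abs] at this; nlinarith
      _ = _ := by field_simp; ring
  have e3 : |kb ψ Y (w / 64) a b| ≤ (16 * B + 256 * B * L) * (ε / |b| ^ 3) := by
    rw [kb]
    refine (abs_sub _ _).trans ?_
    rw [abs_mul _ (ψ _), abs_of_nonneg h0]
    calc _ ≤ 16 * B * (ε / |b| ^ 3) * 1 + 64 * B * L / w * (ε / ((a - b) ^ 2 + ε ^ 2)) :=
          add_le_add (by gcongr) (h.kpd a b)
      _ ≤ 16 * B * (ε / |b| ^ 3) * 1 + 64 * B * L / |b| * (4 * (ε / |b| ^ 2)) := by gcongr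
      _ = _ := by field_simp; ring
  rw [abs_mul, abs_mul, abs_of_nonneg g0]
  calc _ ≤ (16 * B + 256 * B * L) * (ε / |b| ^ 3) * (1 * (ε / (a ^ 2 + ε ^ 2))) := by
        gcongr; exact h.ub a
    _ = _ := by ring

lemma ufar (h : Core ψ Y u w ε B D L E) (a b : ℝ) (hb : 0 < |b|) (hab : |b| / 4 ≤ |a|) :
    |u a| ≤ 16 * (ε / |b| ^ 2) ∧ |deriv u a| ≤ 64 * E * (ε / |b| ^ 3) := by
  have hε := h.epos
  have hE := h.hE
  constructor
  · refine (h.ub a).trans ?_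
    calc ε / (a ^ 2 + ε ^ 2) ≤ ε / (|b| / 4) ^ 2 := by
          gcongr
          have : (|b| / 4) ^ 2 ≤ |a| ^ 2 := by gcongr
          rw [sq_abs] at this; nlinarith
      _ = _ := by field_simp; ring
  · refine (h.ud a).trans ?_
    calc E * (ε / (ε ^ 3 + |a| ^ 3)) ≤ E * (ε / (|b| / 4) ^ 3) := by
          gcongr
          have : (|b| / 4) ^ 3 ≤ |a| ^ 3 := by gcongr
          have : 0 < ε ^ 3 := by positivity
          linarith
      _ = _ := by field_simp; ring

lemma T2 (h : Core ψ Y u w ε B D L E) (a b : ℝ) (hb : 0 < |b|) :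
    |(1 - ψ (a / (|b| / 2))) * u a| ≤ 16 * (ε / |b| ^ 2) ∧
    |(1 - ψ (a / (|b| / 2))) * deriv u a - deriv ψ (a / (|b| / 2)) / (|b| / 2) * u a| ≤
      (64 * E + 32 * L) * (ε / |b| ^ 3) := by
  have hε := h.epos
  have hE := h.hE
  have hL := h.hL
  rcases lt_or_ge |a| (|b| / 4) with hc | hc
  · have hc' : |a / (|b| / 2)| < 1 / 2 := by
      rw [abs_div, abs_of_pos (by positivity : 0 < |b| / 2), div_lt_iff₀ (by positivity)]
      linarith
    rw [h.ψo _ hc'.le, h.dψ0 _ hc']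
    simp only [sub_self, zero_mul, zero_div, abs_zero]
    constructor <;> positivity
  · obtain ⟨u1, u2⟩ := h.ufar a b hb hc
    have g0 := h.ψ0 (a / (|b| / 2))
    have g1 := h.ψ1 (a / (|b| / 2))
    have g2 := h.ψd (a / (|b| / 2))
    have g3 : |1 - ψ (a / (|b| / 2))| ≤ 1 := by rw [abs_le]; constructor <;> linarith
    constructor
    · rw [abs_mul]
      calc _ ≤ 1 * (16 * (ε / |b| ^ 2)) := by gcongr
        _ = _ := one_mul _
    · refine (abs_sub _ _).trans ?_
      rw [abs_mul, abs_mul, abs_div, abs_of_pos (by positivity : 0 < |b| / 2)]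
      calc _ ≤ 1 * (64 * E * (ε / |b| ^ 3)) + L / (|b| / 2) * (16 * (ε / |b| ^ 2)) := by gcongr
        _ = _ := by field_simp; ring

lemma Dbound2 (h : Core ψ Y u w ε B D L E) (b : ℝ) (hb : ε < |b|) (hbw : |b| ≤ w) :
    |∫ a, kb ψ Y (w / 64) a b * u a| ≤
      2 * (16 * B + 256 * B * L + 16 * D + B * (64 * E + 32 * L)) * (ε / (ε ^ 3 + |b| ^ 3)) * (2 * π) := by
  have hε := h.epos
  have hB : 0 ≤ B := by linarith [h.hB]
  have hL := h.hL
  have hD := h.hD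
  have hE := h.hE
  have hw := h.hw
  have hb0 : 0 < |b| := hε.trans hb
  obtain ⟨c1, c2, c3⟩ := kk_cont ψ Y h.cψ h.Ypos h.cY (w / 64)
  replace c1 : Continuous (fun a => kk ψ Y (w / 64) a b) := c1.comp (Continuous.prodMk_left b)
  replace c2 : Continuous (fun a => kb ψ Y (w / 64) a b) := c2.comp (Continuous.prodMk_left b)
  replace c3 : Continuous (fun a => ky ψ Y (w / 64) a b) := c3.comp (Continuous.prodMk_left b)
  have cu := h.cu.continuous
  have cu' := h.cu.continuous_deriv le_rfl
  have cψ := h.cψ.continuous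
  have cψ' := h.cψ.continuous_deriv le_rfl
  have cη : Continuous (fun a => ψ (a / (|b| / 2))) := by fun_prop
  have cη' : Continuous (fun a => deriv ψ (a / (|b| / 2)) / (|b| / 2)) :=
    (cψ'.comp (by fun_prop)).div_const _
  set v : ℝ → ℝ := fun a => (1 - ψ (a / (|b| / 2))) * u a with hv
  set v' : ℝ → ℝ := fun a =>
    (1 - ψ (a / (|b| / 2))) * deriv u a - deriv ψ (a / (|b| / 2)) / (|b| / 2) * u a with hv'
  have cv : Continuous v := (continuous_const.sub cη).mul cu
  have cv' : Continuous v' := ((continuous_const.sub cη).mul cu').sub (cη'.mul cu)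
  have sv : HasCompactSupport v := h.ucs.mul_left
  have sv' : HasCompactSupport v' := (h.ucs.deriv.mul_left).sub (h.ucs.mul_left)
  have dv : ∀ a, HasDerivAt v (v' a) a := by
    intro a
    have q1 : HasDerivAt (fun a => a / (|b| / 2)) (1 / (|b| / 2)) a := (hasDerivAt_id a).div_const _
    have q2 := HasDerivAt.comp a
      ((h.cψ.differentiable one_ne_zero) (a / (|b| / 2))).hasDerivAt q1
    have q3 := (q2.const_sub 1).mul ((h.cu.differentiable one_ne_zero) a).hasDerivAt
    refine q3.congr_deriv ?_
    simp only [hv', Function.comp_apply]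
    ring
  have i1 : Integrable (fun a => kk ψ Y (w / 64) a b * v a) :=
    (c1.mul cv).integrable_of_hasCompactSupport sv.mul_left
  have i2 : Integrable (fun a => (- kb ψ Y (w / 64) a b + ky ψ Y (w / 64) a b) * v a
      + kk ψ Y (w / 64) a b * v' a) :=
    (((c2.neg.add c3).mul cv).integrable_of_hasCompactSupport sv.mul_left).add
      ((c1.mul cv').integrable_of_hasCompactSupport sv'.mul_left)
  have i3 : Integrable (fun a => kb ψ Y (w / 64) a b * u a) :=
    (c2.mul cu).integrable_of_hasCompactSupport h.ucs.mul_left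
  have z := integral_eq_zero_of_hasDerivAt_of_integrable (fun a =>
    (kk_deriv_a ψ Y (h.cψ.differentiable one_ne_zero) h.Ypos (h.cY.differentiable one_ne_zero)
      (w / 64) a b).mul (dv a)) i2 i1
  have e : ∫ a, kb ψ Y (w / 64) a b * u a = ∫ a, (kb ψ Y (w / 64) a b * u a +
      ((- kb ψ Y (w / 64) a b + ky ψ Y (w / 64) a b) * v a + kk ψ Y (w / 64) a b * v' a)) := by
    rw [integral_add i3 i2, z, add_zero]
  rw [e]
  apply aux_bound ε hε b
  intro a
  have t1 := h.T1 a b hb0 hbw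
  obtain ⟨t2, t3⟩ := h.T2 a b hb0
  have m1 := h.kkb a b
  have m2 := h.kyb a b
  have p1 : 0 ≤ ε / ((a - b) ^ 2 + ε ^ 2) := by positivity
  have p2 : 0 ≤ ε / (a ^ 2 + ε ^ 2) := by positivity
  have p3 : ε / |b| ^ 3 ≤ 2 * (ε / (ε ^ 3 + |b| ^ 3)) := by
    have : ε ^ 3 ≤ |b| ^ 3 := by gcongr
    rw [← mul_div_assoc, div_le_div_iff₀ (by positivity) (by positivity)]
    nlinarith
  have s2 : |ky ψ Y (w / 64) a b * v a| ≤ 16 * D * (ε / |b| ^ 3) * (ε / ((a - b) ^ 2 + ε ^ 2)) := by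
    rw [abs_mul]
    calc _ ≤ D / w * (ε / ((a - b) ^ 2 + ε ^ 2)) * (16 * (ε / |b| ^ 2)) := by gcongr
      _ ≤ D / |b| * (ε / ((a - b) ^ 2 + ε ^ 2)) * (16 * (ε / |b| ^ 2)) := by gcongr
      _ = _ := by field_simp
  have s3 : |kk ψ Y (w / 64) a b * v' a| ≤
      B * (64 * E + 32 * L) * (ε / |b| ^ 3) * (ε / ((a - b) ^ 2 + ε ^ 2)) := by
    rw [abs_mul]
    calc _ ≤ B * (ε / ((a - b) ^ 2 + ε ^ 2)) * ((64 * E + 32 * L) * (ε / |b| ^ 3)) := by gcongr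
      _ = _ := by ring
  have split : kb ψ Y (w / 64) a b * u a +
      ((- kb ψ Y (w / 64) a b + ky ψ Y (w / 64) a b) * v a + kk ψ Y (w / 64) a b * v' a) =
      kb ψ Y (w / 64) a b * (ψ (a / (|b| / 2)) * u a) + ky ψ Y (w / 64) a b * v a
        + kk ψ Y (w / 64) a b * v' a := by
    simp only [hv]; ring
  rw [split]
  refine (abs_add_three _ _ _).trans ?_
  set P := ε / ((a - b) ^ 2 + ε ^ 2)
  set Q := ε / (a ^ 2 + ε ^ 2)
  calc _ ≤ (16 * B + 256 * B * L) * (ε / |b| ^ 3) * Q + 16 * D * (ε / |b| ^ 3) * P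
        + B * (64 * E + 32 * L) * (ε / |b| ^ 3) * P := by gcongr
    _ ≤ (16 * B + 256 * B * L) * (ε / |b| ^ 3) * (P + Q) + 16 * D * (ε / |b| ^ 3) * (P + Q)
        + B * (64 * E + 32 * L) * (ε / |b| ^ 3) * (P + Q) := by
        gcongr <;> linarith
    _ = (16 * B + 256 * B * L + 16 * D + B * (64 * E + 32 * L)) * (ε / |b| ^ 3) * (P + Q) := by ring
    _ ≤ (16 * B + 256 * B * L + 16 * D + B * (64 * E + 32 * L)) * (2 * (ε / (ε ^ 3 + |b| ^ 3))) * (P + Q) := by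
        gcongr
    _ = _ := by ring

lemma Nzero (h : Core ψ Y u w ε B D L E) (b : ℝ) (hb : w / 32 < |b|) :
    ∫ a, kk ψ Y (w / 64) a b * u a = 0 := by
  have hw := h.hw
  have : ∀ a, kk ψ Y (w / 64) a b * u a = 0 := by
    intro a
    rcases lt_or_ge (w / 64) |a| with hc | hc
    · rw [h.uz a hc, mul_zero]
    · have : 1 < |(a - b) / (w / 64)| := by
        rw [abs_div, abs_of_pos (by positivity : 0 < w / 64), lt_div_iff₀ (by positivity)]
        have := abs_sub_abs_le_abs_sub b a
        rw [abs_sub_comm] at this; linarith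
      rw [kk, h.ψz _ this]; ring
  simp [this]

end Core
lemma f_bound (δ A : ℝ) (hδ : 0 < δ) (f : ℝ → ℝ) (hf : ContDiffOn ℝ 5 f (Ioo (-δ) δ))
    (f0 : f 0 = 0) (f1 : derivWithin f (Ioo (-δ) δ) 0 = 0)
    (f2 : ∀ x ∈ Ioo (-δ) δ, |iteratedDerivWithin 2 f (Ioo (-δ) δ) x| ≤ A) :
    ∀ x ∈ Ioo (-δ) δ, |deriv f x| ≤ A * |x| ∧ |f x| ≤ A * x ^ 2 := by
  have hu : UniqueDiffOn ℝ (Ioo (-δ) δ) := isOpen_Ioo.uniqueDiffOn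
  have hz : (0:ℝ) ∈ Ioo (-δ) δ := ⟨by linarith, hδ⟩
  have hA : 0 ≤ A := (abs_nonneg _).trans (f2 0 hz)
  have hd : DifferentiableOn ℝ (derivWithin f (Ioo (-δ) δ)) (Ioo (-δ) δ) :=
    (hf.derivWithin hu (m := 1) (by norm_num)).differentiableOn one_ne_zero
  have e : ∀ x ∈ Ioo (-δ) δ, deriv f x = derivWithin f (Ioo (-δ) δ) x := fun x hx =>
    (derivWithin_of_isOpen isOpen_Ioo hx).symm
  have h1 : ∀ x ∈ Ioo (-δ) δ, |deriv f x| ≤ A * |x| := by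
    intro x hx
    have := Convex.norm_image_sub_le_of_norm_derivWithin_le (C := A) hd (fun y hy => by
      have := f2 y hy
      rw [iteratedDerivWithin_succ, iteratedDerivWithin_one] at this
      exact this) (convex_Ioo _ _) hz hx
    rw [f1, sub_zero, sub_zero] at this
    rw [e x hx]; exact this
  intro x hx
  refine ⟨h1 x hx, ?_⟩
  have hsub : Icc (-|x|) |x| ⊆ Ioo (-δ) δ := by
    intro y hy
    have := abs_lt.2 hx
    exact ⟨by linarith [hy.1], by linarith [hy.2]⟩
  have := Convex.norm_image_sub_le_of_norm_hasDerivWithin_le (f := f) (f' := deriv f)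
    (s := Icc (-|x|) |x|) (x := 0) (y := x) (C := A * |x|) (fun y hy => by
      refine HasDerivAt.hasDerivWithinAt (DifferentiableAt.hasDerivAt ?_)
      exact (hf.differentiableOn (by norm_num)).differentiableAt (isOpen_Ioo.mem_nhds (hsub hy)))
    (fun y hy => (h1 y (hsub hy)).trans (mul_le_mul_of_nonneg_left (abs_le.2 hy) hA)) (convex_Icc _ _)
    ⟨by simp, by simp⟩ (abs_le.1 le_rfl)
  rw [f0, sub_zero, sub_zero] at this
  calc |f x| ≤ A * |x| * |x| := this
    _ = A * x ^ 2 := by rw [mul_assoc, ← sq, sq_abs]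

lemma mk_core (δ A : ℝ) (hδ : δ ∈ Ioc (0:ℝ) (1/100)) (hA : 1 ≤ A)
    (ψ : ℝ → ℝ) (hψ : IsCutoff ψ) (L : ℝ) (hL : ∀ x, |deriv ψ x| ≤ L)
    (ε : ℝ) (hε : ε ∈ Ioc (0:ℝ) (δ ^ 2 / 100)) (f g : ℝ → ℝ) (hfg : GoodFG δ A ε f g)
    (φ : ℝ → ℝ) (hφ : InC2 δ ε φ) :
    ∃ Y u, Core ψ Y u (√ε) ε (2 + 2 * A) (2 * A + 32 * L * (1 + 2 * A)) L (1 + 64 * L) ∧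
      ∀ b, Mstar ψ ε f g φ b = (2 * π)⁻¹ * ∫ a, kk ψ Y (√ε / 64) a b * u a := by
  obtain ⟨hδ0, hδ1⟩ := hδ
  obtain ⟨hε0, hε1⟩ := hε
  obtain ⟨ψc, -, ψi, ψz, ψo⟩ := hψ
  obtain ⟨fc, gc, f0, g0, f1, g1, fg3, pos⟩ := hfg
  obtain ⟨φc, -, φs, φb⟩ := hφ
  set w := √ε with hw
  have hw0 : 0 < w := Real.sqrt_pos.2 hε0
  have hw2 : ε = w ^ 2 := (Real.sq_sqrt hε0.le).symm
  have hwδ : w ≤ δ / 10 := by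
    apply Real.sqrt_le_iff.2 ⟨by positivity, by linarith [hε1, show (δ/10)^2 = δ^2/100 by ring]⟩
  have hw1 : w ≤ 1 := by linarith
  have hL0 : 0 ≤ L := (abs_nonneg _).trans (hL 0)
  have ψc1 : ContDiff ℝ 1 ψ := ψc.of_le (by exact_mod_cast le_top)
  have ψd : Differentiable ℝ ψ := ψc1.differentiable one_ne_zero
  have bf := f_bound δ A hδ0 f fc f0 f1 (fun x hx =>
    (le_add_of_nonneg_right (abs_nonneg _)).trans (fg3 x hx 2 (by norm_num)))
  have bg := f_bound δ A hδ0 g gc g0 g1 (fun x hx =>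
    (le_add_of_nonneg_left (abs_nonneg _)).trans (fg3 x hx 2 (by norm_num)))
  have mem : ∀ x, |x| ≤ w / 32 → x ∈ Ioo (-δ) δ := fun x hx => by
    have := abs_le.1 hx; constructor <;> linarith
  -- bounds on X
  set X : ℝ → ℝ := fun a => 2 * ε + f a + g a with hX
  have Xat : ∀ x ∈ Ioo (-δ) δ, ContDiffAt ℝ 1 X x := fun x hx => by
    have a1 := (fc.contDiffAt (isOpen_Ioo.mem_nhds hx)).of_le (m := 1) (by norm_num)
    have a2 := (gc.contDiffAt (isOpen_Ioo.mem_nhds hx)).of_le (m := 1) (by norm_num)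
    exact (contDiffAt_const.add a1).add a2
  have Xl : ∀ x, |x| ≤ w / 32 → ε ≤ X x := fun x hx => by
    have := abs_le.1 hx
    have m : x ∈ Ioo (-(4 * w)) (4 * w) := ⟨by linarith, by linarith⟩
    have := pos x m x m
    simp only [hX]; linarith
  have xsq : ∀ x, |x| ≤ w / 32 → x ^ 2 ≤ ε := fun x hx => by
    have : |x| ^ 2 ≤ w ^ 2 := by gcongr; linarith
    rw [sq_abs] at this; linarith
  have Xu : ∀ x, |x| ≤ w / 32 → X x ≤ (2 + 2 * A) * ε := fun x hx => by
    have u1 := (abs_le.1 (bf x (mem x hx)).2).2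
    have u2 := (abs_le.1 (bg x (mem x hx)).2).2
    have := xsq x hx
    simp only [hX]; nlinarith
  have Xd : ∀ x, |x| ≤ w / 32 → |deriv X x| ≤ 2 * A * w := fun x hx => by
    have m := mem x hx
    have d1 : HasDerivAt f (deriv f x) x := ((fc.differentiableOn (by norm_num)).differentiableAt
      (isOpen_Ioo.mem_nhds m)).hasDerivAt
    have d2 : HasDerivAt g (deriv g x) x := ((gc.differentiableOn (by norm_num)).differentiableAt
      (isOpen_Ioo.mem_nhds m)).hasDerivAt
    have d3 : HasDerivAt X (deriv f x + deriv g x) x := (d1.const_add (2 * ε)).add d2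
    rw [d3.deriv]
    have u1 := (bf x m).1
    have u2 := (bg x m).1
    have : A * |x| ≤ A * w := by gcongr; linarith
    exact (abs_add_le _ _).trans (by linarith)
  have r32 : 0 < w / 32 := by positivity
  have far : ∀ c : ℝ, 0 < c → ∀ x, c < |x| → 1 < |x / c| := fun c hc x hx => by
    rwa [abs_div, abs_of_pos hc, lt_div_iff₀ hc, one_mul]
  have evfar : ∀ c : ℝ, ∀ x, c < |x| → ∀ᶠ y in nhds x, c < |y| := fun c x hx =>
    (continuous_abs.continuousAt (x := x)).eventually_const_lt hx
  have dψc : ∀ c x : ℝ, HasDerivAt (fun a => ψ (a / c)) (deriv ψ (x / c) / c) x := fun c x => by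
    have q1 : HasDerivAt (fun a : ℝ => a / c) (1 / c) x := (hasDerivAt_id x).div_const _
    refine (HasDerivAt.comp x (ψd (x / c)).hasDerivAt q1).congr_deriv ?_
    ring
  set Y : ℝ → ℝ := fun a => ε + (X a - ε) * ψ (a / (w / 32)) with hY
  have Yfar : ∀ x, w / 32 < |x| → Y x = ε := fun x hx => by
    simp only [hY]; rw [ψz _ (far _ r32 x hx)]; ring
  set u : ℝ → ℝ := fun a => ψ (a / (w / 64)) * φ a with hu
  have r64 : 0 < w / 64 := by positivity
  have ufar : ∀ x, w / 64 < |x| → u x = 0 := fun x hx => by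
    simp only [hu]; rw [ψz _ (far _ r64 x hx)]; ring
  have φz : ∀ x, x ∉ Ioo (-δ) δ → φ x = 0 := fun x hx => by
    by_contra hne
    exact hx (φs (subset_tsupport _ hne))
  refine ⟨Y, u, ?_, ?_⟩
  · refine ⟨hw0, hw1, hw2, by linarith, by positivity, hL0, by positivity, ψc1, fun x => (ψi x).1,
      fun x => (ψi x).2, ψz, ψo, hL, ?_, ?_, ?_, ?_, ?_, ufar, ?_, ?_⟩
    · rw [contDiff_iff_contDiffAt]
      intro x
      rcases lt_or_ge (w / 32) |x| with hx | hx
      · refine (contDiffAt_const (c := ε)).congr_of_eventuallyEq ?_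
        filter_upwards [evfar _ x hx] with y hy using Yfar y hy
      · have : ContDiff ℝ 1 (fun a => ψ (a / (w / 32))) := ψc1.comp (contDiff_id.div_const _)
        exact contDiffAt_const.add (((Xat x (mem x hx)).sub contDiffAt_const).mul this.contDiffAt)
    · intro x
      rcases lt_or_ge (w / 32) |x| with hx | hx
      · rw [Yfar x hx]
      · have := Xl x hx
        have := (ψi (x / (w / 32))).1
        simp only [hY]; nlinarith
    · intro x
      rcases lt_or_ge (w / 32) |x| with hx | hx
      · rw [Yfar x hx]; nlinarith
      · have := Xl x hx
        have := Xu x hx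
        have := (ψi (x / (w / 32))).1
        have := (ψi (x / (w / 32))).2
        simp only [hY]; nlinarith
    · intro x
      rcases lt_or_ge (w / 32) |x| with hx | hx
      · have : Y =ᶠ[nhds x] fun _ => ε := by
          filter_upwards [evfar _ x hx] with y hy using Yfar y hy
        rw [this.deriv_eq]; simp only [deriv_const, abs_zero]; positivity
      · have dX := ((Xat x (mem x hx)).differentiableAt one_ne_zero).hasDerivAt
        have dY : HasDerivAt Y _ x := ((dX.sub_const ε).mul (dψc (w / 32) x)).const_add ε
        rw [dY.deriv]
        have p1 := (ψi (x / (w / 32))).1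
        have p2 := (ψi (x / (w / 32))).2
        have p3 := Xl x hx
        have p4 := Xu x hx
        refine (abs_add_le _ _).trans ?_
        rw [abs_mul, abs_mul, abs_of_nonneg p1, abs_of_nonneg (by linarith : 0 ≤ X x - ε), abs_div,
          abs_of_pos r32]
        calc _ ≤ 2 * A * w * 1 + ((1 + 2 * A) * ε) * (L / (w / 32)) := by
              gcongr
              · exact Xd x hx
              · linarith
              · exact hL _
          _ = _ := by rw [hw2]; field_simp
    · have : ContDiff ℝ 1 (fun a => ψ (a / (w / 64))) := ψc1.comp (contDiff_id.div_const _)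
      exact this.mul φc
    · intro x
      by_cases hx : x ∈ Ioo (-δ) δ
      · have := (φb x hx).1
        rw [sq_abs] at this
        have p1 := (ψi (x / (w / 64))).1
        have p2 := (ψi (x / (w / 64))).2
        simp only [hu]
        rw [abs_mul, abs_of_nonneg p1, add_comm (x ^ 2)]
        nlinarith [abs_nonneg (φ x)]
      · simp only [hu, φz x hx, mul_zero, abs_zero]; positivity
    · intro x
      rcases lt_or_ge (w / 64) |x| with hx | hx
      · have : u =ᶠ[nhds x] fun _ => 0 := by
          filter_upwards [evfar _ x hx] with y hy using ufar y hy
        rw [this.deriv_eq]; simp only [deriv_const, abs_zero]; positivity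
      · have dφ := (φc.differentiable one_ne_zero x).hasDerivAt
        have du : HasDerivAt u _ x := (dψc (w / 64) x).mul dφ
        rw [du.deriv]
        obtain ⟨b1, b2⟩ := φb x (mem x (by linarith))
        have p1 := (ψi (x / (w / 64))).1
        have p2 := (ψi (x / (w / 64))).2
        have hle : 1 / w * (ε / (ε ^ 2 + |x| ^ 2)) ≤ ε / (ε ^ 3 + |x| ^ 3) := by
          rw [div_mul_div_comm, one_mul, div_le_div_iff₀ (by positivity) (by positivity)]
          have ew : ε ≤ w := by rw [hw2]; nlinarith
          have c1 : ε ^ 3 ≤ w * ε ^ 2 := by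
            calc ε ^ 3 = ε * ε ^ 2 := by ring
              _ ≤ w * ε ^ 2 := by gcongr
          have c2 : |x| ^ 3 ≤ w * |x| ^ 2 := by
            calc |x| ^ 3 = |x| * |x| ^ 2 := by ring
              _ ≤ w * |x| ^ 2 := by gcongr; linarith
          have : ε ^ 3 + |x| ^ 3 ≤ w * (ε ^ 2 + |x| ^ 2) := by linarith
          gcongr
        refine (abs_add_le _ _).trans ?_
        rw [abs_mul, abs_mul, abs_of_nonneg p1, abs_div, abs_of_pos r64]
        calc _ ≤ L / (w / 64) * (ε / (ε ^ 2 + |x| ^ 2)) + 1 * (ε / (ε ^ 3 + |x| ^ 3)) := by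
              gcongr
              exact hL _
          _ = 64 * L * (1 / w * (ε / (ε ^ 2 + |x| ^ 2))) + 1 * (ε / (ε ^ 3 + |x| ^ 3)) := by
              congr 1; field_simp
          _ ≤ 64 * L * (ε / (ε ^ 3 + |x| ^ 3)) + 1 * (ε / (ε ^ 3 + |x| ^ 3)) := by gcongr
          _ = _ := by ring
  · intro b
    rw [Mstar]
    congr 1
    apply integral_congr_ae
    refine ae_of_all _ fun a => ?_
    simp only [Mker, scut, kk, hu, Xt]
    rw [← hw, show (2:ℝ) ^ 6 = 64 by norm_num]
    rcases lt_or_ge (w / 64) |a| with hx | hx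
    · rw [ψz _ (far _ r64 a hx)]; ring
    · have : Y a = 2 * ε + f a + g a := by
        simp only [hY, hX]
        rw [ψo]
        · ring
        · rw [abs_div, abs_of_pos r32, div_le_iff₀ r32]; linarith
      rw [this]; ring

/-- **`M*` preserves the class `C₂` up to a constant (Lemma 3.2(ii), estimate (3.12)).**  There is
`A₁ > 0` depending only on `A` and `δ` (and `ψ`) with `A₁⁻¹ M*φ ∈ C₂` for every `φ ∈ C₂`; in
particular `|M*φ(β)| ≲ ε/(ε²+β²)` and `|(M*φ)'(β)| ≲ ε/(ε³+|β|³)` for `|β| ≤ √ε`. -/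
theorem Mstar_preserves_C2 (δ A : ℝ) (hδ : δ ∈ Ioc (0:ℝ) (1/100)) (hA : 1 ≤ A)
    (ψ : ℝ → ℝ) (hψ : IsCutoff ψ) :
    ∃ A1 : ℝ, 0 < A1 ∧
      ∀ ε : ℝ, ε ∈ Ioc (0:ℝ) (δ ^ 2 / 100) →
      ∀ f g : ℝ → ℝ, GoodFG δ A ε f g →
      ∀ φ : ℝ → ℝ, InC2 δ ε φ →
        InC2 δ ε (fun β => A1⁻¹ * Mstar ψ ε f g φ β) ∧
        ∀ β : ℝ, |β| ≤ Real.sqrt ε →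
          |Mstar ψ ε f g φ β| ≤ A1 * (ε / (ε ^ 2 + β ^ 2)) ∧
          |deriv (Mstar ψ ε f g φ) β| ≤ A1 * (ε / (ε ^ 3 + |β| ^ 3)) := by
  have hψ' := hψ
  obtain ⟨ψc, -, -, ψz, -⟩ := hψ'
  obtain ⟨L, hL⟩ : ∃ L, ∀ x, ‖deriv ψ x‖ ≤ L := by
    apply HasCompactSupport.exists_bound_of_continuous
    · apply HasCompactSupport.deriv
      refine HasCompactSupport.intro (K := Icc (-1) 1) isCompact_Icc fun x hx => ψz x ?_
      by_contra hh
      exact hx (abs_le.1 (not_lt.1 hh))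
    · exact ψc.continuous_deriv (by exact_mod_cast le_top)
  have hL0 : 0 ≤ L := (norm_nonneg _).trans (hL 0)
  have hδ0 := hδ.1
  set B := 2 + 2 * A with hB
  set D := 2 * A + 32 * L * (1 + 2 * A) with hD
  set E := 1 + 64 * L with hE
  have hB0 : 0 ≤ B := by positivity
  have hD0 : 0 ≤ D := by positivity
  have hE0 : 0 ≤ E := by positivity
  set K1 := 2 * (16 * B + 256 * B * L + 16 * D + B * (64 * E + 32 * L)) with hK1
  set K2 := 2 * (1 + 64 * B * L) with hK2
  have hK10 : 0 ≤ K1 := by positivity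
  have hK20 : 0 < K2 := by positivity
  set A1 := 4 * B + K1 + K2 with hA1
  have hA10 : 0 < A1 := by positivity
  refine ⟨A1, hA10, ?_⟩
  intro ε hε f g hfg φ hφ
  obtain ⟨Y, u, hc, hM⟩ := mk_core δ A hδ hA ψ hψ L hL ε hε f g hfg φ hφ
  have hε0 := hε.1
  have hwδ : √ε ≤ δ / 10 := by
    apply Real.sqrt_le_iff.2 ⟨by positivity, by linarith [hε.2, show (δ/10)^2 = δ^2/100 by ring]⟩
  have hMf : Mstar ψ ε f g φ = fun b => (2 * π)⁻¹ * ∫ a, kk ψ Y (√ε / 64) a b * u a := funext hM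
  obtain ⟨dN, cN⟩ := hc.hasDeriv
  have dM : ∀ b, HasDerivAt (Mstar ψ ε f g φ) ((2 * π)⁻¹ * ∫ a, kb ψ Y (√ε / 64) a b * u a) b := by
    intro b; rw [hMf]; exact (dN b).const_mul _
  have derM : deriv (Mstar ψ ε f g φ) = fun b => (2 * π)⁻¹ * ∫ a, kb ψ Y (√ε / 64) a b * u a :=
    funext fun b => (dM b).deriv
  have cM : ContDiff ℝ 1 (Mstar ψ ε f g φ) := by
    rw [contDiff_one_iff_deriv]
    refine ⟨fun b => (dM b).differentiableAt, ?_⟩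
    rw [derM]; exact cN.const_mul _
  have hw0 : 0 < √ε := hc.hw
  have hπ : 0 < 2 * π := by positivity
  have scale : ∀ I C : ℝ, |I| ≤ C * (2 * π) → |(2 * π)⁻¹ * I| ≤ C := by
    intro I C h
    rw [abs_mul, abs_of_pos (by positivity), inv_mul_le_iff₀ hπ]
    linarith
  have Mz : ∀ b, √ε / 32 < |b| → Mstar ψ ε f g φ b = 0 := fun b hb => by
    rw [hM, hc.Nzero b hb, mul_zero]
  have b0 : ∀ b, |Mstar ψ ε f g φ b| ≤ A1 * (ε / (ε ^ 2 + b ^ 2)) := fun b => by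
    rw [hM]
    refine (scale _ _ (hc.Nbound b)).trans ?_
    gcongr
    linarith
  have b1 : ∀ b, |deriv (Mstar ψ ε f g φ) b| ≤ A1 * (ε / (ε ^ 3 + |b| ^ 3)) := fun b => by
    rcases lt_or_ge (√ε / 32) |b| with hb | hb
    · have : Mstar ψ ε f g φ =ᶠ[nhds b] fun _ => 0 := by
        filter_upwards [(continuous_abs.continuousAt (x := b)).eventually_const_lt hb] with y hy
          using Mz y hy
      rw [this.deriv_eq]; simp only [deriv_const, abs_zero]; positivity
    · rw [derM]
      rcases le_or_gt |b| ε with h | h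
      · refine (scale _ _ (hc.Dbound1 b h)).trans ?_
        gcongr
        linarith
      · refine (scale _ _ (hc.Dbound2 b h (by linarith))).trans ?_
        gcongr
        linarith
  have hts : tsupport (fun β => A1⁻¹ * Mstar ψ ε f g φ β) ⊆ Icc (-(√ε / 32)) (√ε / 32) := by
    apply closure_minimal _ isClosed_Icc
    intro x hx
    by_contra hh
    apply hx
    simp only
    rw [Mz x, mul_zero]
    by_contra h2
    exact hh (abs_le.1 (not_lt.1 h2))
  refine ⟨⟨contDiff_const.mul cM, ?_, ?_, ?_⟩, fun b _ => ⟨b0 b, b1 b⟩⟩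
  · exact isCompact_Icc.of_isClosed_subset (isClosed_tsupport _) hts
  · refine hts.trans fun x hx => ⟨by linarith [hx.1], by linarith [hx.2]⟩
  · intro b _
    constructor
    · rw [abs_mul, abs_of_pos (by positivity), inv_mul_le_iff₀ hA10, sq_abs]
      exact b0 b
    · rw [((dM b).const_mul A1⁻¹).deriv, ← (dM b).deriv, abs_mul, abs_of_pos (by positivity),
        inv_mul_le_iff₀ hA10]
      exact b1 b
end
end
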